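/- Let n ≥ 1 and let P := F_q[X_1,…,X_n,Y_1,…,Y_n,Z_{1−n},…,Z_{n−1}] be a polynomial ring in 4n−1 variables, with φ: P → F_q[x_1,…,x_n,y_1,…,y_n] the F_q-algebra homomorphism X_i ↦ f̃_i, Y_i ↦ f̃_i*, Z_j ↦ u_j (1−n ≤ j ≤ n−1). For 0 ≤ t < s ≤ n define C_{s,t} := Σ_{1 ≤ j_1 < ⋯ < j_{s−t} ≤ s} ∏_{l=1}^{s−t} X_{j_l}^{q^{t+l−j_l}} ∈ P and C*_{s,t} the same expression with X replaced by Y, with C_{s,s} = C*_{s,s} := 1. For 1 ≤ k ≤ n define R̃_k := ( Σ_{i=0}^{k−1} Σ_{j=0}^{n−k} (−1)^{i+j} C_{k−1,i} C*_{n−k,j} Z_{i−j}^{q^{min(i,j)}} )^{q−1} − X_k Y_{n+1−k}, and for 1 ≤ k ≤ n−1 define R̃_k^+ := Σ_{i=0}^{k−1} Σ_{j=0}^{n−k} (−1)^{i+j} ( C_{k−1,i}^q C*_{n−k,j} Z_{i−j+1}^{q^{min(i+1,j)}} − X_k C_{k−1,i} C*_{n−k,j} Z_{i−j}^{q^{min(i,j)}}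 ). Then the kernel of φ is the ideal of P generated by the 2n−1 polynomials R̃_1, R̃_1^+, R̃_2, R̃_2^+, …, R̃_{n−1}, R̃_{n−1}^+, R̃_n. -/

import Mathlib

open MvPolynomial

variable (F : Type) [Field F] [Fintype F] (n : ℕ)

/-- `fX F n k` is the orbit product `f_k` (1-indexed, meaningful for `1 ≤ k ≤ n`). -/
noncomputable def fX (k : ℕ) : MvPolynomial (Fin n ⊕ Fin n) F :=
  if h : 1 ≤ k ∧ k ≤ n then
    ∏ α : Fin (k - 1) → F,
      (X (Sum.inl ⟨k - 1, by omega⟩) +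
        ∑ j : Fin (k - 1), C (α j) * X (Sum.inl ⟨j.val, by omega⟩))
  else 0

/-- `fY F n k` is `f_k^*` (1-indexed), the orbit product of `y_{n+1-k}`. -/
noncomputable def fY (k : ℕ) : MvPolynomial (Fin n ⊕ Fin n) F :=
  if h : 1 ≤ k ∧ k ≤ n then
    ∏ α : Fin (k - 1) → F,
      (X (Sum.inr ⟨n - k, by omega⟩) +
        ∑ j : Fin (k - 1), C (α j) * X (Sum.inr ⟨n - 1 - j.val, by omega⟩))
  else 0

/-- `uInv F n j` is the invariant `u_j`, for `j : ℤ`. -/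
noncomputable def uInv (j : ℤ) : MvPolynomial (Fin n ⊕ Fin n) F :=
  if 0 ≤ j then ∑ k : Fin n, X (Sum.inl k) ^ (Fintype.card F) ^ j.toNat * X (Sum.inr k)
  else ∑ k : Fin n, X (Sum.inl k) * X (Sum.inr k) ^ (Fintype.card F) ^ (-j).toNat

/-- `cX F n s t` is the Dickson-type invariant `c_{s,t}` (in the `x`-variables):
the sum over strictly increasing sequences `1 ≤ j_1 < ⋯ < j_{s-t} ≤ s` (encoded as
strictly monotone functions `Fin (s-t) → Fin s`) of `∏_l f_{j_l}^{(q-1)·q^{t+l-j_l}}`. -/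
noncomputable def cX (s t : ℕ) : MvPolynomial (Fin n ⊕ Fin n) F :=
  if s ≤ n then
    ∑ g ∈ Finset.univ.filter (fun g : Fin (s - t) → Fin s => ∀ a b : Fin (s - t), a < b → g a < g b),
      ∏ l : Fin (s - t),
        fX F n ((g l).val + 1) ^ ((Fintype.card F - 1) * (Fintype.card F) ^ (t + l.val - (g l).val))
  else 0

/-- `cY F n s t` is `c_{s,t}^*` (in the `y`-variables). -/
noncomputable def cY (s t : ℕ) : MvPolynomial (Fin n ⊕ Fin n) F :=
  if s ≤ n then
    ∑ g ∈ Finset.univ.filter (fun g : Fin (s - t) → Fin s => ∀ a b : Fin (s - t), a < b → g a < g b),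
      ∏ l : Fin (s - t),
        fY F n ((g l).val + 1) ^ ((Fintype.card F - 1) * (Fintype.card F) ^ (t + l.val - (g l).val))
  else 0

/-- The variable `X_k` (1-indexed) of the presentation ring `P` for `B_n`. -/
noncomputable def Xv (k : ℕ) : MvPolynomial (Fin n ⊕ Fin n ⊕ Fin (2 * n - 1)) F :=
  if h : 1 ≤ k ∧ k ≤ n then X (Sum.inl ⟨k - 1, by omega⟩) else 0

/-- The variable `Y_k` (1-indexed). -/
noncomputable def Yv (k : ℕ) : MvPolynomial (Fin n ⊕ Fin n ⊕ Fin (2 * n - 1)) F :=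
  if h : 1 ≤ k ∧ k ≤ n then X (Sum.inr (Sum.inl ⟨k - 1, by omega⟩)) else 0

/-- The variable `Z_j` for `j ∈ {1-n,…,n-1}`. -/
noncomputable def Zv (j : ℤ) : MvPolynomial (Fin n ⊕ Fin n ⊕ Fin (2 * n - 1)) F :=
  if h : 1 - (n : ℤ) ≤ j ∧ j ≤ (n : ℤ) - 1 then
    X (Sum.inr (Sum.inr ⟨(j + n - 1).toNat, by omega⟩))
  else 0

/-- `C_{s,t}` in the presentation ring (in terms of the variables `X_i`, which map to `f̃_i`). -/
noncomputable def CXv (s t : ℕ) : MvPolynomial (Fin n ⊕ Fin n ⊕ Fin (2 * n - 1)) F :=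
  ∑ g ∈ Finset.univ.filter (fun g : Fin (s - t) → Fin s => ∀ a b : Fin (s - t), a < b → g a < g b),
    ∏ l : Fin (s - t),
      Xv F n ((g l).val + 1) ^ ((Fintype.card F) ^ (t + l.val - (g l).val))

/-- `C_{s,t}^*` in the presentation ring. -/
noncomputable def CYv (s t : ℕ) : MvPolynomial (Fin n ⊕ Fin n ⊕ Fin (2 * n - 1)) F :=
  ∑ g ∈ Finset.univ.filter (fun g : Fin (s - t) → Fin s => ∀ a b : Fin (s - t), a < b → g a < g b),
    ∏ l : Fin (s - t),
      Yv F n ((g l).val + 1) ^ ((Fintype.card F) ^ (t + l.val - (g l).val))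

/-- The relation polynomial `R̃_k`. -/
noncomputable def RvTilde (k : ℕ) : MvPolynomial (Fin n ⊕ Fin n ⊕ Fin (2 * n - 1)) F :=
  (∑ i ∈ Finset.range k, ∑ j ∈ Finset.range (n - k + 1),
    (-1 : MvPolynomial (Fin n ⊕ Fin n ⊕ Fin (2 * n - 1)) F) ^ (i + j) *
      CXv F n (k - 1) i * CYv F n (n - k) j *
      Zv F n ((i : ℤ) - (j : ℤ)) ^ (Fintype.card F ^ min i j)) ^ (Fintype.card F - 1)
  - Xv F n k * Yv F n (n + 1 - k)

/-- The relation polynomial `R̃_k^+`. -/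
noncomputable def RvTildePlus (k : ℕ) : MvPolynomial (Fin n ⊕ Fin n ⊕ Fin (2 * n - 1)) F :=
  ∑ i ∈ Finset.range k, ∑ j ∈ Finset.range (n - k + 1),
    (-1 : MvPolynomial (Fin n ⊕ Fin n ⊕ Fin (2 * n - 1)) F) ^ (i + j) *
      (CXv F n (k - 1) i ^ (Fintype.card F) * CYv F n (n - k) j *
          Zv F n ((i : ℤ) - (j : ℤ) + 1) ^ (Fintype.card F ^ min (i + 1) j)
        - Xv F n k * CXv F n (k - 1) i * CYv F n (n - k) j *
          Zv F n ((i : ℤ) - (j : ℤ)) ^ (Fintype.card F ^ min i j))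

/-!
The orbit polynomial `P_k(z) = ∏ (z + α_1 x_1 + ⋯ + α_k x_k)` is additive in `z` and equals
`∑ (-1)^(k-i) C_{k,i} z^(q^i)`; it vanishes at `x_1, …, x_k`. Write `P*_k` for its analogue in
`y_n, …, y_{n+1-k}`. In `∑_m P_{k-1}(x_m) P*_{n-k}(y_m)` only the term `m = k` survives, and
expanding both factors expresses `f_k f*_{n+1-k}` in the `f̃_i`, `f̃*_i` and `u_j`. Raising this
to the power `q - 1` gives `R̃_k`, and replacing `P_{k-1}(x_m)` by its `q`-th power gives `R̃_k^+`.

Modulo the `X_i` and `Y_i` each relation is, up to sign, a power `Z_j ^ D_j`, and the relations are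
homogeneous. Hence modulo the relations every polynomial is a combination of monomials in which the
exponent of each `Z_j` is less than `D_j`.

The images of these reduced monomials are linearly independent by a rank count over the algebra `A`
generated by the `f̃_i` and `f̃*_i`. The power products of the `x_i` and `y_j` with exponents below
the degrees `(q-1) q^i` are independent over `A`, and multiplication by a power of the determinant
`δ` of the matrix `(P_{k-1}(x_m))` moves them into `A[x, u]`, as `δ y_j ∈ A[x, u]` by Cramer's rule.
But `A[x, u]` is spanned by the power products of the `x_i` and `u_j` with bounds `(q-1) q^i` and
`D_j`, and there are equally many of those, since `∏ D_j = ∏ (q-1) q^i`.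
-/

section StrictMonoSum

variable {R S : Type*} [CommSemiring R] [CommSemiring S]

/-- The sum of `∏ l, w l (g l)` over all strictly increasing `g : Fin r → Fin s`, the
common shape of the sums `CXv` and `CYv`. -/
noncomputable def strictMonoSum (w : ℕ → ℕ → R) (r s : ℕ) : R :=
  ∑ g ∈ Finset.univ.filter (fun g : Fin r → Fin s => ∀ a b : Fin r, a < b → g a < g b),
    ∏ l : Fin r, w l.val (g l).val

theorem val_add_le_of_strictMono {r s : ℕ} {g : Fin r → Fin s}
    (hg : ∀ a b : Fin r, a < b → g a < g b) (l : Fin r) : (g l).val + r ≤ s + l.val := by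
  have hmono : StrictMono g := fun a b => hg a b
  have hcard := Finset.card_le_card_of_injOn (s := Finset.Ici l) (t := Finset.Ici (g l)) g
    (fun a ha => by simpa using hmono.monotone (by simpa using ha)) hmono.injective.injOn
  rw [Fin.card_Ici, Fin.card_Ici] at hcard
  omega

theorem strictMonoSum_congr {w w' : ℕ → ℕ → R} {r s : ℕ}
    (h : ∀ l g, g + r ≤ s + l → w l g = w' l g) :
    strictMonoSum w r s = strictMonoSum w' r s :=
  Finset.sum_congr rfl fun _ hg => Finset.prod_congr rfl fun l _ =>
    h l _ (val_add_le_of_strictMono (Finset.mem_filter.mp hg).2 l)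

theorem strictMonoSum_zero (w : ℕ → ℕ → R) (s : ℕ) : strictMonoSum w 0 s = 1 := by
  simp [strictMonoSum]

theorem strictMonoSum_eq_zero (w : ℕ → ℕ → R) {r s : ℕ} (h : s < r) : strictMonoSum w r s = 0 := by
  refine Finset.sum_eq_zero fun g hg => ?_
  have := val_add_le_of_strictMono (Finset.mem_filter.mp hg).2 ⟨0, by omega⟩
  simp only at this
  omega

theorem map_strictMonoSum {G : Type*} [FunLike G R S] [RingHomClass G R S] (f : G)
    (w : ℕ → ℕ → R) (r s : ℕ) :
    f (strictMonoSum w r s) = strictMonoSum (fun l g => f (w l g)) r s := by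
  simp only [strictMonoSum, map_sum, map_prod]

theorem sum_strictMono_last_ne (w : ℕ → ℕ → R) (r s : ℕ) :
    ∑ g ∈ Finset.univ.filter (fun g : Fin (r + 1) → Fin (s + 1) =>
        (∀ a b, a < b → g a < g b) ∧ g (Fin.last r) ≠ Fin.last s), ∏ l, w l.val (g l).val =
      strictMonoSum w (r + 1) s := by
  symm
  refine Finset.sum_bij (fun g _ l => (g l).castSucc) ?_ ?_ ?_ fun _ _ => rfl
  · intro g hg
    simp only [Finset.mem_filter, Finset.mem_univ, true_and] at hg ⊢
    exact ⟨hg, (Fin.castSucc_lt_last _).ne⟩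
  · exact fun g _ g' _ h => funext fun l => Fin.castSucc_injective _ (congrFun h l)
  · intro g hg
    simp only [Finset.mem_filter, Finset.mem_univ, true_and] at hg
    have hmono : StrictMono g := fun a b => hg.1 a b
    have hlt (l : Fin (r + 1)) : g l < Fin.last s :=
      (hmono.monotone (Fin.le_last l)).trans_lt (Fin.lt_last_iff_ne_last.mpr hg.2)
    refine ⟨fun l => (g l).castLT (hlt l), ?_, rfl⟩
    simp only [Finset.mem_filter, Finset.mem_univ, true_and]
    exact fun a b hab => hg.1 a b hab

theorem sum_strictMono_last_eq (w : ℕ → ℕ → R) (r s : ℕ) :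
    ∑ g ∈ Finset.univ.filter (fun g : Fin (r + 1) → Fin (s + 1) =>
        (∀ a b, a < b → g a < g b) ∧ g (Fin.last r) = Fin.last s), ∏ l, w l.val (g l).val =
      strictMonoSum w r s * w r s := by
  rw [strictMonoSum, Finset.sum_mul]
  symm
  refine Finset.sum_bij (fun g _ => Fin.snoc (α := fun _ => Fin (s + 1))
    (fun l => (g l).castSucc) (Fin.last s)) ?_ ?_ ?_ fun g _ => by simp [Fin.prod_univ_castSucc]
  · intro g hg
    simp only [Finset.mem_filter, Finset.mem_univ, true_and] at hg ⊢
    refine ⟨fun a b hab => ?_, by simp⟩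
    obtain ⟨a, rfl⟩ := Fin.exists_castSucc_eq.mpr (Fin.ne_last_of_lt hab)
    induction b using Fin.lastCases with
    | last => simp
    | cast b => simpa using hg a b (by simpa using hab)
  · exact fun g _ g' _ h => funext fun l => by simpa using congrFun h l.castSucc
  · intro g hg
    simp only [Finset.mem_filter, Finset.mem_univ, true_and] at hg
    have hlt (l : Fin r) : g l.castSucc < Fin.last s :=
      hg.2 ▸ hg.1 l.castSucc (Fin.last r) (Fin.castSucc_lt_last l)
    refine ⟨fun l => (g l.castSucc).castLT (hlt l), ?_, funext fun l => ?_⟩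
    · simp only [Finset.mem_filter, Finset.mem_univ, true_and]
      exact fun a b hab => hg.1 a.castSucc b.castSucc (by simpa using hab)
    · induction l using Fin.lastCases with
      | last => simp [hg.2]
      | cast l => simp

theorem strictMonoSum_succ_succ (w : ℕ → ℕ → R) (r s : ℕ) :
    strictMonoSum w (r + 1) (s + 1) =
      strictMonoSum w (r + 1) s + strictMonoSum w r s * w r s := by
  rw [← sum_strictMono_last_ne w r s, ← sum_strictMono_last_eq w r s, add_comm (Finset.sum _ _),
    strictMonoSum, ← Finset.sum_filter_add_sum_filter_not _ (fun g => g (Fin.last r) = Fin.last s),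
    Finset.filter_filter, Finset.filter_filter]

end StrictMonoSum

section DicksonSum

variable {R S : Type*} [CommSemiring R] [CommSemiring S]

/-- The polynomial `C_{s,t}` of the statement, evaluated at an arbitrary sequence `x` that is
indexed from `0`. -/
noncomputable def dicksonSum (q : ℕ) (x : ℕ → R) (s t : ℕ) : R :=
  strictMonoSum (fun l g => x g ^ q ^ (t + l - g)) (s - t) s

theorem map_dicksonSum {G : Type*} [FunLike G R S] [RingHomClass G R S] (f : G) (q : ℕ)
    (x : ℕ → R) (s t : ℕ) :
    f (dicksonSum q x s t) = dicksonSum q (fun g => f (x g)) s t := by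
  simp only [dicksonSum, map_strictMonoSum, map_pow]

theorem dicksonSum_self (q : ℕ) (x : ℕ → R) (s : ℕ) : dicksonSum q x s s = 1 := by
  rw [dicksonSum, Nat.sub_self, strictMonoSum_zero]

theorem dicksonSum_succ_zero (q : ℕ) (x : ℕ → R) (s : ℕ) :
    dicksonSum q x (s + 1) 0 = x s * dicksonSum q x s 0 := by
  simp only [dicksonSum, Nat.sub_zero]
  rw [strictMonoSum_succ_succ, strictMonoSum_eq_zero _ (Nat.lt_succ_self s)]
  simp [mul_comm]

theorem dicksonSum_succ_succ {q : ℕ} {frob : R →+* R} (hfrob : ∀ z, frob z = z ^ q)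
    (x : ℕ → R) {s t : ℕ} (h : t < s) :
    dicksonSum q x (s + 1) (t + 1) = dicksonSum q x s t ^ q + x s * dicksonSum q x s (t + 1) := by
  obtain ⟨r, rfl⟩ : ∃ r, s = t + r + 1 := ⟨s - (t + 1), by omega⟩
  simp only [dicksonSum]
  rw [← hfrob, map_strictMonoSum, show t + r + 1 + 1 - (t + 1) = r + 1 by omega,
    show t + r + 1 - t = r + 1 by omega, show t + r + 1 - (t + 1) = r by omega,
    strictMonoSum_succ_succ]
  congr 1
  · refine strictMonoSum_congr fun l g hg => ?_
    rw [hfrob, ← pow_mul, ← pow_succ]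
    congr 2
    omega
  · rw [show t + 1 + r - (t + r + 1) = 0 by omega, pow_zero, pow_one, mul_comm]

theorem dicksonSum_mem {R : Type*} [CommRing R] {I : Ideal R} {q : ℕ} (hq : q ≠ 0) {x : ℕ → R}
    (hx : ∀ g, x g ∈ I) {s t : ℕ} (h : t < s) : dicksonSum q x s t ∈ I :=
  I.sum_mem fun _ _ => I.mem_of_dvd (Finset.dvd_prod_of_mem _ (Finset.mem_univ ⟨0, by omega⟩))
    (I.pow_mem_of_mem (hx _) _ (by positivity))

theorem sum_range_sub_one_mul_pow {q : ℕ} (hq : q ≠ 0) (t r : ℕ) :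
    ∑ l ∈ Finset.range r, (q - 1) * q ^ (t + l) = q ^ (t + r) - q ^ t := by
  induction r with
  | zero => simp
  | succ r ih =>
    have hle : q ^ t ≤ q ^ (t + r) := Nat.pow_le_pow_right (by omega) (by omega)
    have hle' : q ^ (t + r) ≤ q * q ^ (t + r) := Nat.le_mul_of_pos_left _ (by omega)
    rw [Finset.sum_range_succ, ih, ← add_assoc, pow_succ', Nat.sub_one_mul]
    omega

theorem isWeightedHomogeneous_dicksonSum {σ : Type*} {w : σ → ℕ} {q : ℕ} (hq : q ≠ 0)
    {x : ℕ → MvPolynomial σ R}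
    (hx : ∀ g, IsWeightedHomogeneous w (x g) ((q - 1) * q ^ g)) {s t : ℕ} (h : t ≤ s) :
    IsWeightedHomogeneous w (dicksonSum q x s t) (q ^ s - q ^ t) := by
  have hdeg : q ^ s - q ^ t = ∑ l : Fin (s - t), (q - 1) * q ^ (t + l.val) := by
    rw [Fin.sum_univ_eq_sum_range (fun l => (q - 1) * q ^ (t + l)),
      sum_range_sub_one_mul_pow hq, Nat.add_sub_cancel' h]
  rw [hdeg]
  refine IsWeightedHomogeneous.sum _ _ _ fun g hg => IsWeightedHomogeneous.prod _ _ _ fun l _ => ?_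
  have hle := val_add_le_of_strictMono (Finset.mem_filter.mp hg).2 l
  have hexp : (q - 1) * q ^ (t + l.val) =
      q ^ (t + l.val - (g l).val) • ((q - 1) * q ^ (g l).val) := by
    rw [smul_eq_mul, mul_left_comm, ← pow_add, Nat.sub_add_cancel (by omega)]
  rw [hexp]
  exact (hx _).pow _

end DicksonSum

theorem sum_dicksonSum_succ {R : Type*} [CommRing R] {q : ℕ} {frob : R →+* R}
    (hfrob : ∀ z, frob z = z ^ q) (x : ℕ → R) (k : ℕ) (z : R) :
    ∑ i ∈ Finset.range (k + 2), (-1) ^ (k + 1 + i) * dicksonSum q x (k + 1) i * z ^ q ^ i =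
      (∑ i ∈ Finset.range (k + 1), (-1) ^ (k + i) * dicksonSum q x k i * z ^ q ^ i) ^ q -
        x k * ∑ i ∈ Finset.range (k + 1), (-1) ^ (k + i) * dicksonSum q x k i * z ^ q ^ i := by
  have hpow : (∑ i ∈ Finset.range (k + 1), (-1) ^ (k + i) * dicksonSum q x k i * z ^ q ^ i) ^ q =
      ∑ i ∈ Finset.range k, (-1) ^ (k + i) * dicksonSum q x k i ^ q * z ^ q ^ (i + 1) +
        z ^ q ^ (k + 1) := by
    have hterm (i : ℕ) : frob ((-1) ^ (k + i) * dicksonSum q x k i * z ^ q ^ i) =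
        (-1) ^ (k + i) * dicksonSum q x k i ^ q * z ^ q ^ (i + 1) := by
      rw [map_mul, map_mul, map_pow, map_neg, map_one, hfrob, hfrob, ← pow_mul, ← pow_succ]
    rw [← hfrob, map_sum, Finset.sum_congr rfl fun i _ => hterm i, Finset.sum_range_succ,
      dicksonSum_self, one_pow, (Even.add_self k).neg_one_pow, one_mul, one_mul]
  have hmul : x k * ∑ i ∈ Finset.range (k + 1), (-1) ^ (k + i) * dicksonSum q x k i * z ^ q ^ i =
      (-1) ^ k * (x k * dicksonSum q x k 0) * z -
        ∑ i ∈ Finset.range k, (-1) ^ (k + i) * (x k * dicksonSum q x k (i + 1)) *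
          z ^ q ^ (i + 1) := by
    rw [Finset.sum_range_succ', mul_add, Finset.mul_sum, add_comm, sub_eq_add_neg,
      ← Finset.sum_neg_distrib]
    exact congrArg₂ _ (by simp only [add_zero, pow_zero, pow_one]; ring)
      (Finset.sum_congr rfl fun i _ => by ring)
  have hsum : ∑ i ∈ Finset.range k, (-1) ^ (k + 1 + (i + 1)) * dicksonSum q x (k + 1) (i + 1) *
        z ^ q ^ (i + 1) =
      ∑ i ∈ Finset.range k, (-1) ^ (k + i) * dicksonSum q x k i ^ q * z ^ q ^ (i + 1) +
        ∑ i ∈ Finset.range k, (-1) ^ (k + i) * (x k * dicksonSum q x k (i + 1)) *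
          z ^ q ^ (i + 1) := by
    rw [← Finset.sum_add_distrib]
    refine Finset.sum_congr rfl fun i hi => ?_
    rw [dicksonSum_succ_succ hfrob x (Finset.mem_range.mp hi)]
    ring
  rw [hpow, hmul, Finset.sum_range_succ', Finset.sum_range_succ, hsum, dicksonSum_self,
    dicksonSum_succ_zero, (Even.add_self (k + 1)).neg_one_pow]
  ring

section OrbitProd

variable {K : Type*} [Field K] [Fintype K] {R : Type*} [CommRing R] [Algebra K R]

variable (K) in
/-- The orbit polynomial of the `K`-span of `x 0, …, x (k - 1)`, evaluated at `z`; then `f_{k+1}` is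
its value at `z = x k`. -/
noncomputable def orbitProd (x : ℕ → R) (k : ℕ) (z : R) : R :=
  ∏ α : Fin k → K, (z + ∑ j : Fin k, algebraMap K R (α j) * x j.val)

theorem orbitProd_zero (x : ℕ → R) (z : R) : orbitProd K x 0 z = z := by
  simp [orbitProd]

theorem orbitProd_apply_eq_zero (x : ℕ → R) {k m : ℕ} (h : m < k) : orbitProd K x k (x m) = 0 := by
  classical
  refine Finset.prod_eq_zero (Finset.mem_univ (Pi.single ⟨m, h⟩ (-1))) ?_
  rw [Finset.sum_eq_single_of_mem ⟨m, h⟩ (Finset.mem_univ _) fun j _ hj => by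
    rw [Pi.single_eq_of_ne hj, map_zero, zero_mul]]
  simp

theorem orbitProd_apply_zero (x : ℕ → R) (k : ℕ) : orbitProd K x k 0 = 0 :=
  Finset.prod_eq_zero (Finset.mem_univ 0) (by simp)

theorem orbitProd_succ_eq_prod (x : ℕ → R) (k : ℕ) (z : R) :
    orbitProd K x (k + 1) z = ∏ a : K, orbitProd K x k (z + algebraMap K R a * x k) := by
  rw [orbitProd, ← (Fin.snocEquiv fun _ : Fin (k + 1) => K).prod_comp, Fintype.prod_prod_type]
  refine Finset.prod_congr rfl fun a _ => Finset.prod_congr rfl fun α _ => ?_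
  rw [Fin.sum_univ_castSucc]
  simp only [Fin.snocEquiv, Equiv.coe_fn_mk, Fin.snoc_castSucc, Fin.snoc_last, Fin.val_castSucc,
    Fin.val_last]
  ring

theorem prod_add_algebraMap (z : R) :
    ∏ a : K, (z + algebraMap K R a) = z ^ Fintype.card K - z := by
  have hcard : 1 < Fintype.card K := Fintype.one_lt_card
  have hfactor : ∏ a : K, (Polynomial.X - Polynomial.C a) =
      (Polynomial.X ^ Fintype.card K - Polynomial.X : Polynomial K) := by
    have hroots := FiniteField.roots_X_pow_card_sub_X K
    have := Polynomial.prod_multiset_X_sub_C_of_monic_of_roots_card_eq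
      (Polynomial.monic_X_pow_sub (p := (Polynomial.X : Polynomial K)) (by simpa using hcard))
      (by rw [hroots, FiniteField.X_pow_card_sub_X_natDegree_eq K hcard]; rfl)
    rwa [hroots] at this
  have heval := congrArg (Polynomial.aeval z) hfactor
  rw [map_prod, ← Equiv.prod_comp (Equiv.neg K)] at heval
  simpa using heval

theorem prod_add_algebraMap_mul_of_field {L : Type*} [Field L] [Algebra K L] (z s : L) :
    ∏ a : K, (z + algebraMap K L a * s) =
      z ^ Fintype.card K - s ^ (Fintype.card K - 1) * z := by
  have hcard : 1 < Fintype.card K := Fintype.one_lt_card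
  rcases eq_or_ne s 0 with rfl | hs
  · simp [zero_pow (Nat.sub_ne_zero_of_lt hcard)]
  · have hfactor (a : K) : z + algebraMap K L a * s = s * (z / s + algebraMap K L a) := by
      field_simp
    simp only [hfactor, Finset.prod_mul_distrib, prod_add_algebraMap, Finset.prod_const,
      Finset.card_univ]
    rw [mul_sub, ← mul_pow, mul_div_cancel₀ z hs, ← pow_sub_one_mul (by omega) s, mul_assoc,
      mul_div_cancel₀ z hs]

variable [IsDomain R]

theorem prod_add_algebraMap_mul (z s : R) :
    ∏ a : K, (z + algebraMap K R a * s) =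
      z ^ Fintype.card K - s ^ (Fintype.card K - 1) * z := by
  apply IsFractionRing.injective R (FractionRing R)
  simpa [← IsScalarTower.algebraMap_apply] using
    prod_add_algebraMap_mul_of_field (K := K) (algebraMap R (FractionRing R) z) (algebraMap R _ s)

theorem orbitProd_succ_of_linear {x : ℕ → R} {k : ℕ} {L : R →ₗ[K] R}
    (hL : ∀ z, L z = orbitProd K x k z) (z : R) :
    orbitProd K x (k + 1) z = L z ^ Fintype.card K - L (x k) ^ (Fintype.card K - 1) * L z := by
  simp only [orbitProd_succ_eq_prod, ← hL, map_add, ← Algebra.smul_def, map_smul]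
  simp only [Algebra.smul_def, prod_add_algebraMap_mul]

theorem exists_linearMap_eq_orbitProd (x : ℕ → R) (k : ℕ) :
    ∃ L : R →ₗ[K] R, ∀ z, L z = orbitProd K x k z := by
  induction k with
  | zero => exact ⟨LinearMap.id, fun z => (orbitProd_zero x z).symm⟩
  | succ k ih =>
    obtain ⟨L, hL⟩ := ih
    exact ⟨(FiniteField.frobeniusAlgHom K R).toLinearMap ∘ₗ L -
      LinearMap.mulLeft K (L (x k) ^ (Fintype.card K - 1)) ∘ₗ L,
      fun z => (orbitProd_succ_of_linear hL z).symm⟩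

theorem orbitProd_succ (x : ℕ → R) (k : ℕ) (z : R) :
    orbitProd K x (k + 1) z = orbitProd K x k z ^ Fintype.card K -
      orbitProd K x k (x k) ^ (Fintype.card K - 1) * orbitProd K x k z := by
  obtain ⟨L, hL⟩ := exists_linearMap_eq_orbitProd (K := K) x k
  simp only [orbitProd_succ_of_linear hL, hL]

theorem orbitProd_eq_sum (x : ℕ → R) (k : ℕ) (z : R) :
    orbitProd K x k z = ∑ i ∈ Finset.range (k + 1), (-1) ^ (k + i) *
      dicksonSum (Fintype.card K) (fun g => orbitProd K x g (x g) ^ (Fintype.card K - 1)) k i *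
      z ^ Fintype.card K ^ i := by
  induction k with
  | zero => simp [orbitProd_zero, dicksonSum_self]
  | succ k ih =>
    rw [sum_dicksonSum_succ (frob := (FiniteField.frobeniusAlgHom K R : R →+* R)) fun _ => rfl,
      orbitProd_succ, ih]

theorem exists_monic_aeval_eq_orbitProd {A : Type*} [CommRing A] [Algebra A R] {x : ℕ → R}
    {y : ℕ → A} (k : ℕ)
    (hy : ∀ g < k, algebraMap A R (y g) = orbitProd K x g (x g) ^ (Fintype.card K - 1)) :
    ∃ p : Polynomial A, p.Monic ∧ p.natDegree = Fintype.card K ^ k ∧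
      ∀ z : R, Polynomial.aeval z p = orbitProd K x k z := by
  have hcard : 1 < Fintype.card K := Fintype.one_lt_card
  have : Nontrivial A := (algebraMap A R).domain_nontrivial
  induction k with
  | zero => exact ⟨Polynomial.X, Polynomial.monic_X, by simp, by simp [orbitProd_zero]⟩
  | succ k ih =>
    obtain ⟨p, hmonic, hdeg, haeval⟩ := ih fun g hg => hy g (by omega)
    have hlt : (y k • p).degree < (p ^ Fintype.card K).degree := by
      refine (Polynomial.degree_smul_le _ _).trans_lt ?_
      rw [Polynomial.degree_eq_natDegree hmonic.ne_zero,
        Polynomial.degree_eq_natDegree (hmonic.pow _).ne_zero, hmonic.natDegree_pow, hdeg,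
        Nat.cast_lt]
      exact lt_mul_of_one_lt_left (by positivity) hcard
    refine ⟨p ^ Fintype.card K - y k • p, (hmonic.pow _).sub_of_left hlt, ?_, fun z => ?_⟩
    · rw [Polynomial.natDegree_eq_of_degree_eq (Polynomial.degree_sub_eq_left_of_degree_lt hlt),
        hmonic.natDegree_pow, hdeg, pow_succ']
    · simp [haeval, Algebra.smul_def, hy k (Nat.lt_succ_self k), orbitProd_succ]

end OrbitProd

section FrobeniusPower

variable (K : Type*) [Field K] [Fintype K] {R : Type*} [CommRing R] [Algebra K R]

theorem exists_algHom_eq_pow_card_pow (d : ℕ) :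
    ∃ frob : R →ₐ[K] R, ∀ z, frob z = z ^ Fintype.card K ^ d := by
  induction d with
  | zero => exact ⟨AlgHom.id K R, fun z => by simp⟩
  | succ d ih =>
    obtain ⟨frob, hfrob⟩ := ih
    exact ⟨frob.comp (FiniteField.frobeniusAlgHom K R), fun z => by
      rw [AlgHom.comp_apply, hfrob, pow_succ', pow_mul, FiniteField.frobeniusAlgHom_apply]⟩

theorem orbitProd_pow_eq_sum [IsDomain R] (x : ℕ → R) (k d : ℕ) (z : R) :
    orbitProd K x k z ^ Fintype.card K ^ d = ∑ i ∈ Finset.range (k + 1), (-1) ^ (k + i) *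
      dicksonSum (Fintype.card K) (fun g => orbitProd K x g (x g) ^ (Fintype.card K - 1)) k i ^
        Fintype.card K ^ d * z ^ Fintype.card K ^ (i + d) := by
  obtain ⟨frob, hfrob⟩ := exists_algHom_eq_pow_card_pow K (R := R) d
  rw [← hfrob, orbitProd_eq_sum, map_sum]
  refine Finset.sum_congr rfl fun i _ => ?_
  rw [map_mul, map_mul, map_pow, map_neg, map_one, hfrob, hfrob, ← pow_mul, ← pow_add]

end FrobeniusPower

section VariableSequences

variable (R : Type*) [CommSemiring R]

/-- The variables `x_1, …, x_n` as a sequence indexed from `0`, extended by zero. -/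
noncomputable def xSeq (g : ℕ) : MvPolynomial (Fin n ⊕ Fin n) R :=
  if h : g < n then X (Sum.inl ⟨g, h⟩) else 0

/-- The variables `y_n, …, y_1`, in this reversed order, as a sequence indexed from `0`, extended by
zero. -/
noncomputable def ySeq (g : ℕ) : MvPolynomial (Fin n ⊕ Fin n) R :=
  if h : g < n then X (Sum.inr (Fin.rev ⟨g, h⟩)) else 0

theorem xSeq_val (m : Fin n) : xSeq n R m.val = X (Sum.inl m) := by
  rw [xSeq, dif_pos m.isLt]

theorem ySeq_val (m : Fin n) : ySeq n R m.val = X (Sum.inr m.rev) := by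
  rw [ySeq, dif_pos m.isLt]

end VariableSequences

section PresentationMap

theorem sum_alternating_mul_sum {R ι : Type*} [CommRing R] [Fintype ι] (a b : ℕ) (A B : ℕ → R)
    (p r : ℕ → ι → R) :
    ∑ i ∈ Finset.range (a + 1), ∑ j ∈ Finset.range (b + 1),
        (-1) ^ (i + j) * A i * B j * ∑ m, p i m * r j m =
      (-1) ^ (a + b) * ∑ m, (∑ i ∈ Finset.range (a + 1), (-1) ^ (a + i) * A i * p i m) *
        ∑ j ∈ Finset.range (b + 1), (-1) ^ (b + j) * B j * r j m := by
  have hsign (i j : ℕ) : (-1 : R) ^ (i + j) =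
      (-1) ^ (a + b) * ((-1) ^ (a + i) * (-1) ^ (b + j)) := by
    rw [← pow_add (-1 : R) (a + i), ← pow_add,
      show a + b + (a + i + (b + j)) = 2 * (a + b) + (i + j) by ring,
      pow_add _ (2 * (a + b)), (even_two_mul (a + b)).neg_one_pow, one_mul]
  simp_rw [Finset.sum_mul_sum, Finset.mul_sum]
  conv_rhs => rw [Finset.sum_comm]
  refine Finset.sum_congr rfl fun i _ => ?_
  rw [Finset.sum_comm]
  refine Finset.sum_congr rfl fun m _ => Finset.sum_congr rfl fun j _ => ?_
  rw [hsign]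
  ring

theorem fX_succ (g : ℕ) : fX F n (g + 1) = orbitProd F (xSeq n F) g (xSeq n F g) := by
  rcases Nat.lt_or_ge g n with hg | hg
  · rw [fX, dif_pos ⟨by omega, by omega⟩]
    refine Finset.prod_congr rfl fun α _ => congrArg₂ _ (xSeq_val n F ⟨g, hg⟩).symm
      (Finset.sum_congr rfl fun j _ => congrArg _ (xSeq_val n F ⟨j, by omega⟩).symm)
  · rw [fX, dif_neg (by omega), xSeq, dif_neg (by omega), orbitProd_apply_zero]

theorem fY_succ (g : ℕ) : fY F n (g + 1) = orbitProd F (ySeq n F) g (ySeq n F g) := by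
  rcases Nat.lt_or_ge g n with hg | hg
  · rw [fY, dif_pos ⟨by omega, by omega⟩]
    refine Finset.prod_congr rfl fun α _ => congrArg₂ _ ?_ (Finset.sum_congr rfl fun j _ => ?_)
    · exact (ySeq_val n F ⟨g, hg⟩).symm
    · rw [ySeq, dif_pos (by omega), algebraMap_eq]
      exact congrArg (fun m => (C (α j) * X (Sum.inr m) : MvPolynomial _ F))
        (Fin.ext (by simp only [Fin.val_rev]; omega))
  · rw [fY, dif_neg (by omega), ySeq, dif_neg (by omega), orbitProd_apply_zero]

/-- The map `φ : P → F[V ⊕ V*]` whose kernel is presented. -/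
noncomputable def presentationMap :
    MvPolynomial (Fin n ⊕ Fin n ⊕ Fin (2 * n - 1)) F →ₐ[F] MvPolynomial (Fin n ⊕ Fin n) F :=
  aeval (Sum.elim (fun i : Fin n => fX F n (i.val + 1) ^ (Fintype.card F - 1))
    (Sum.elim (fun i : Fin n => fY F n (i.val + 1) ^ (Fintype.card F - 1))
      (fun m : Fin (2 * n - 1) => uInv F n ((m : ℤ) + 1 - n))))

theorem presentationMap_Xv (g : ℕ) : presentationMap F n (Xv F n (g + 1)) =
    orbitProd F (xSeq n F) g (xSeq n F g) ^ (Fintype.card F - 1) := by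
  rw [← fX_succ]
  rcases Nat.lt_or_ge g n with hg | hg
  · rw [Xv, dif_pos ⟨by omega, by omega⟩, presentationMap, aeval_X]
    rfl
  · rw [Xv, dif_neg (by omega), fX, dif_neg (by omega), map_zero,
      zero_pow (Nat.sub_ne_zero_of_lt Fintype.one_lt_card)]

theorem presentationMap_Yv (g : ℕ) : presentationMap F n (Yv F n (g + 1)) =
    orbitProd F (ySeq n F) g (ySeq n F g) ^ (Fintype.card F - 1) := by
  rw [← fY_succ]
  rcases Nat.lt_or_ge g n with hg | hg
  · rw [Yv, dif_pos ⟨by omega, by omega⟩, presentationMap, aeval_X]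
    rfl
  · rw [Yv, dif_neg (by omega), fY, dif_neg (by omega), map_zero,
      zero_pow (Nat.sub_ne_zero_of_lt Fintype.one_lt_card)]

theorem CXv_eq_dicksonSum (s t : ℕ) :
    CXv F n s t = dicksonSum (Fintype.card F) (fun g => Xv F n (g + 1)) s t := rfl

theorem CYv_eq_dicksonSum (s t : ℕ) :
    CYv F n s t = dicksonSum (Fintype.card F) (fun g => Yv F n (g + 1)) s t := rfl

theorem presentationMap_CXv (s t : ℕ) : presentationMap F n (CXv F n s t) =
    dicksonSum (Fintype.card F)
      (fun g => orbitProd F (xSeq n F) g (xSeq n F g) ^ (Fintype.card F - 1)) s t := by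
  simp only [CXv_eq_dicksonSum, ← presentationMap_Xv]
  exact map_dicksonSum (presentationMap F n) _ _ s t

theorem presentationMap_CYv (s t : ℕ) : presentationMap F n (CYv F n s t) =
    dicksonSum (Fintype.card F)
      (fun g => orbitProd F (ySeq n F) g (ySeq n F g) ^ (Fintype.card F - 1)) s t := by
  simp only [CYv_eq_dicksonSum, ← presentationMap_Yv]
  exact map_dicksonSum (presentationMap F n) _ _ s t

theorem presentationMap_Zv {j : ℤ} (h₁ : 1 - (n : ℤ) ≤ j) (h₂ : j ≤ (n : ℤ) - 1) :
    presentationMap F n (Zv F n j) = uInv F n j := by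
  rw [Zv, dif_pos ⟨h₁, h₂⟩, presentationMap, aeval_X]
  exact congrArg (uInv F n) (by simp only; omega)

theorem uInv_sub_pow (i j : ℕ) :
    uInv F n ((i : ℤ) - j) ^ Fintype.card F ^ min i j =
      ∑ m : Fin n, X (Sum.inl m) ^ Fintype.card F ^ i * X (Sum.inr m) ^ Fintype.card F ^ j := by
  obtain ⟨frob, hfrob⟩ :=
    exists_algHom_eq_pow_card_pow F (R := MvPolynomial (Fin n ⊕ Fin n) F) (min i j)
  rw [← hfrob, uInv]
  split_ifs with hij
  · rw [map_sum]
    refine Finset.sum_congr rfl fun m _ => ?_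
    rw [hfrob, mul_pow, ← pow_mul, ← pow_add]
    congr 3 <;> omega
  · rw [map_sum]
    refine Finset.sum_congr rfl fun m _ => ?_
    rw [hfrob, mul_pow, ← pow_mul, ← pow_add]
    congr 3 <;> omega

/-- The alternating sum in `R̃_{k+1}` for `d = 0`, and the leading part of `R̃_{k+1}^+` for
`d = 1`. -/
noncomputable def pairingSum (d k : ℕ) : MvPolynomial (Fin n ⊕ Fin n ⊕ Fin (2 * n - 1)) F :=
  ∑ i ∈ Finset.range (k + 1), ∑ j ∈ Finset.range (n - (k + 1) + 1),
    (-1) ^ (i + j) * CXv F n k i ^ Fintype.card F ^ d * CYv F n (n - (k + 1)) j *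
      Zv F n (((i + d : ℕ) : ℤ) - j) ^ Fintype.card F ^ min (i + d) j

theorem RvTilde_succ {k : ℕ} (hk : k < n) : RvTilde F n (k + 1) =
    pairingSum F n 0 k ^ (Fintype.card F - 1) - Xv F n (k + 1) * Yv F n (n - (k + 1) + 1) := by
  rw [RvTilde, show n + 1 - (k + 1) = n - (k + 1) + 1 by omega]
  simp only [pairingSum, Nat.add_sub_cancel, add_zero, pow_zero, pow_one]

theorem RvTildePlus_succ (k : ℕ) : RvTildePlus F n (k + 1) =
    pairingSum F n 1 k - Xv F n (k + 1) * pairingSum F n 0 k := by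
  simp only [RvTildePlus, pairingSum, Nat.add_sub_cancel, Finset.mul_sum,
    ← Finset.sum_sub_distrib, add_zero, pow_zero, pow_one, Nat.cast_succ]
  refine Finset.sum_congr rfl fun i _ => Finset.sum_congr rfl fun j _ => ?_
  rw [sub_add_eq_add_sub]
  ring

theorem sum_orbitProd_mul_orbitProd {k : ℕ} (hk : k < n) {d : ℕ} (hd : d ≠ 0) :
    ∑ m : Fin n, orbitProd F (xSeq n F) k (X (Sum.inl m)) ^ d *
        orbitProd F (ySeq n F) (n - (k + 1)) (X (Sum.inr m)) =
      orbitProd F (xSeq n F) k (xSeq n F k) ^ d *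
        orbitProd F (ySeq n F) (n - (k + 1)) (ySeq n F (n - (k + 1))) := by
  have hY (m : Fin n) : (X (Sum.inr m) : MvPolynomial (Fin n ⊕ Fin n) F) = ySeq n F m.rev := by
    rw [ySeq_val, Fin.rev_rev]
  simp only [← xSeq_val, hY]
  rw [Finset.sum_eq_single_of_mem ⟨k, hk⟩ (Finset.mem_univ _) fun m _ hm => ?_, Fin.val_rev]
  rcases lt_or_gt_of_ne (fun h => hm (Fin.ext h) : m.val ≠ k) with hlt | hgt
  · rw [orbitProd_apply_eq_zero _ hlt, zero_pow hd, zero_mul]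
  · have hlt : m.rev.val < n - (k + 1) := by
      rw [Fin.val_rev]
      omega
    rw [orbitProd_apply_eq_zero _ hlt, mul_zero]

theorem presentationMap_pairingSum {d k : ℕ} (hk : k + d < n) :
    presentationMap F n (pairingSum F n d k) = (-1) ^ (n - 1) *
      (orbitProd F (xSeq n F) k (xSeq n F k) ^ Fintype.card F ^ d *
        orbitProd F (ySeq n F) (n - (k + 1)) (ySeq n F (n - (k + 1)))) := by
  have hq : Fintype.card F ^ d ≠ 0 := pow_ne_zero d Fintype.card_ne_zero
  rw [← sum_orbitProd_mul_orbitProd F n (by omega) hq, show n - 1 = k + (n - (k + 1)) by omega]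
  simp only [orbitProd_pow_eq_sum F (xSeq n F), orbitProd_eq_sum (K := F) (ySeq n F) (n - (k + 1)),
    ← presentationMap_CXv, ← presentationMap_CYv]
  rw [← sum_alternating_mul_sum, pairingSum]
  simp only [map_sum, map_mul, map_pow, map_neg, map_one]
  refine Finset.sum_congr rfl fun i hi => Finset.sum_congr rfl fun j hj => ?_
  rw [Finset.mem_range] at hi hj
  rw [presentationMap_Zv F n (by omega) (by omega), uInv_sub_pow]

theorem presentationMap_RvTilde {k : ℕ} (hk : k < n) :
    presentationMap F n (RvTilde F n (k + 1)) = 0 := by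
  have hsign : ((-1 : MvPolynomial (Fin n ⊕ Fin n) F) ^ (n - 1)) ^ (Fintype.card F - 1) = 1 := by
    simpa using congrArg (C (σ := Fin n ⊕ Fin n))
      (FiniteField.pow_card_sub_one_eq_one ((-1 : F) ^ (n - 1)) (by simp))
  rw [RvTilde_succ F n hk, map_sub, map_mul, map_pow, presentationMap_pairingSum F n (by omega),
    presentationMap_Xv, presentationMap_Yv, mul_pow, mul_pow, hsign, pow_zero, pow_one, one_mul,
    sub_self]

theorem presentationMap_RvTildePlus {k : ℕ} (hk : k + 1 < n) :
    presentationMap F n (RvTildePlus F n (k + 1)) = 0 := by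
  rw [RvTildePlus_succ, map_sub, map_mul, presentationMap_pairingSum F n hk,
    presentationMap_pairingSum F n (by omega), presentationMap_Xv, pow_zero, pow_one, pow_one,
    ← pow_sub_one_mul Fintype.card_ne_zero (orbitProd F (xSeq n F) k (xSeq n F k))]
  ring

end PresentationMap

section WeightReduction

variable {K σ ι : Type*} [CommRing K]

theorem mem_of_forall_monomial_mem {N : Submodule K (MvPolynomial σ K)} {p : MvPolynomial σ K}
    (h : ∀ m ∈ p.support, monomial m 1 ∈ N) : p ∈ N := by
  have hp : p ∈ restrictSupport K (p.support : Set (σ →₀ ℕ)) :=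
    (mem_restrictSupport_iff K).mpr le_rfl
  rw [restrictSupport_eq_span] at hp
  exact Submodule.span_le.mpr (by rintro _ ⟨m, hm, rfl⟩; exact h m hm) hp

theorem X_mul_mem_restrictSupport_sup {z : ι → σ} {D : ι → ℕ} {I : Ideal (MvPolynomial σ K)}
    {a : σ} (ha : a ∉ Set.range z) {p : MvPolynomial σ K}
    (hp : p ∈ restrictSupport K {m | ∀ t, m (z t) < D t} ⊔ I.restrictScalars K) :
    X a * p ∈ restrictSupport K {m | ∀ t, m (z t) < D t} ⊔ I.restrictScalars K := by
  obtain ⟨u, hu, v, hv, rfl⟩ := Submodule.mem_sup.mp hp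
  rw [mul_add]
  refine Submodule.add_mem_sup ?_ (I.mul_mem_left (X a) hv)
  rw [mem_restrictSupport_iff] at hu ⊢
  intro m hm t
  rw [support_X_mul, Finset.mem_coe, Finset.mem_map] at hm
  obtain ⟨m, hm, rfl⟩ := hm
  have hza : a ≠ z t := fun h => ha ⟨t, h.symm⟩
  simpa [hza] using hu hm t

/-- A monomial that is not reduced is either divisible by a variable outside the range of `z`, or
rewritten by a relation into monomials that are; stripping such a variable lowers the weight. -/
theorem restrictSupport_sup_ideal_eq_top {z : ι → σ} {D : ι → ℕ} {w : σ → ℕ}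
    (hw : ∀ a ∉ Set.range z, 0 < w a) {I : Ideal (MvPolynomial σ K)}
    (hrel : ∀ t, ∃ r ∈ I, IsWeightedHomogeneous w r (D t * w (z t)) ∧
      X (z t) ^ D t - r ∈ Ideal.span (X '' (Set.range z)ᶜ)) :
    restrictSupport K {m | ∀ t, m (z t) < D t} ⊔ I.restrictScalars K = ⊤ := by
  set N := restrictSupport K {m | ∀ t, m (z t) < D t} ⊔ I.restrictScalars K
  suffices hmon : ∀ d m, Finsupp.weight w m = d → monomial m 1 ∈ N from
    eq_top_iff.mpr fun p _ => mem_of_forall_monomial_mem fun m _ => hmon _ m rfl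
  intro d
  induction d using Nat.strong_induction_on with
  | _ d ih =>
  have hstrip (m : σ →₀ ℕ) (hm : Finsupp.weight w m = d)
      (hdvd : ∃ a ∈ (Set.range z)ᶜ, m a ≠ 0) : monomial m 1 ∈ N := by
    obtain ⟨a, ha, hma⟩ := hdvd
    obtain ⟨m, rfl⟩ := exists_add_of_le (Finsupp.single_le_iff.mpr (Nat.one_le_iff_ne_zero.mpr hma))
    rw [map_add, Finsupp.weight_single, one_smul] at hm
    rw [← one_mul (1 : K), ← monomial_mul]
    exact X_mul_mem_restrictSupport_sup ha (ih _ (by have := hw a ha; omega) m rfl)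
  intro m hm
  by_cases hred : ∀ t, m (z t) < D t
  · exact Submodule.mem_sup_left ((monomial_mem_restrictSupport K).mpr (Or.inl hred))
  push Not at hred
  obtain ⟨t, ht⟩ := hred
  obtain ⟨r, hrI, hrw, hrJ⟩ := hrel t
  obtain ⟨m, rfl⟩ := exists_add_of_le (Finsupp.single_le_iff.mpr ht)
  rw [map_add, Finsupp.weight_single, smul_eq_mul] at hm
  have hsplit : monomial (Finsupp.single (z t) (D t) + m) (1 : K) =
      (X (z t) ^ D t - r) * monomial m 1 + r * monomial m 1 := by
    rw [← add_mul, sub_add_cancel, X_pow_eq_monomial, monomial_mul, one_mul]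
  rw [hsplit]
  refine N.add_mem (mem_of_forall_monomial_mem fun m' hm' => hstrip m' ?_ ?_)
    (Submodule.mem_sup_right (I.mul_mem_right _ hrI))
  · have hhom := (((isWeightedHomogeneous_X K w (z t)).pow (D t)).sub hrw).mul
      (isWeightedHomogeneous_monomial w m (1 : K) rfl)
    exact (hhom (mem_support_iff.mp hm')).trans hm
  · exact mem_ideal_span_X_image.mp (Ideal.mul_mem_right _ _ hrJ) m' hm'

end WeightReduction

section ReducedDegrees

theorem sum_range_min_half (n : ℕ) :
    ∑ m ∈ Finset.range (2 * n + 1), min ((m + 1) / 2) (n - m / 2) =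
      ∑ k ∈ Finset.range (n + 1), k := by
  have hfst : ∑ m ∈ Finset.range (n + 1), min ((m + 1) / 2) (n - m / 2) =
      ∑ m ∈ Finset.range n, (m + 2) / 2 := by
    rw [Finset.sum_range_succ']
    exact (Nat.add_eq_left.mpr (by simp)).trans
      (Finset.sum_congr rfl fun m hm => by rw [Finset.mem_range] at hm; omega)
  have hsnd : ∑ m ∈ Finset.range n, min ((n + 1 + m + 1) / 2) (n - (n + 1 + m) / 2) =
      ∑ m ∈ Finset.range n, (m + 1) / 2 := by
    rw [← Finset.sum_range_reflect (fun m => (m + 1) / 2)]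
    exact Finset.sum_congr rfl fun m hm => by rw [Finset.mem_range] at hm; omega
  rw [show 2 * n + 1 = n + 1 + n by ring, Finset.sum_range_add, hfst, hsnd, Finset.sum_range_succ',
    add_zero, ← Finset.sum_add_distrib]
  exact Finset.sum_congr rfl fun m _ => by omega

/-- The degree to which `Z_{m+1-n}` occurs alone in its relation, which is `R̃_{k+1}` for `m = 2k`
and `R̃_{k+1}^+` for `m = 2k + 1`. -/
def zDegree (q n m : ℕ) : ℕ :=
  (if m % 2 = 0 then q - 1 else 1) * q ^ min ((m + 1) / 2) (n - 1 - m / 2)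

theorem zDegree_two_mul (q n k : ℕ) :
    zDegree q n (2 * k) = (q - 1) * q ^ min k (n - (k + 1)) := by
  rw [zDegree, if_pos (by omega)]
  congr 3 <;> omega

theorem zDegree_two_mul_add_one (q n k : ℕ) :
    zDegree q n (2 * k + 1) = q ^ min (k + 1) (n - (k + 1)) := by
  rw [zDegree, if_neg (by omega), one_mul]
  congr 2 <;> omega

/-- The exponent vectors of the reduced monomials, those in which every `Z_{m+1-n}` occurs to a
power below `zDegree`. -/
def reducedExps (q : ℕ) : Set (Fin n ⊕ Fin n ⊕ Fin (2 * n - 1) →₀ ℕ) :=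
  {e | ∀ m : Fin (2 * n - 1), e (Sum.inr (Sum.inr m)) < zDegree q n m}

theorem prod_range_ite_even {M : Type*} [CommMonoid M] (a : M) (n : ℕ) :
    ∏ m ∈ Finset.range (2 * n + 1), (if m % 2 = 0 then a else 1) = a ^ (n + 1) := by
  induction n with
  | zero => simp
  | succ n ih =>
    rw [show 2 * (n + 1) + 1 = (2 * n + 1) + 1 + 1 by ring, Finset.prod_range_succ,
      Finset.prod_range_succ, ih, if_neg (by omega), if_pos (by omega), mul_one, pow_succ a (n + 1)]

theorem prod_zDegree (q n : ℕ) :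
    ∏ m : Fin (2 * n - 1), zDegree q n m = ∏ i : Fin n, (q - 1) * q ^ i.val := by
  obtain _ | n := n
  · rfl
  rw [Fin.prod_univ_eq_prod_range (zDegree q (n + 1)),
    Fin.prod_univ_eq_prod_range (fun i => (q - 1) * q ^ i),
    show 2 * (n + 1) - 1 = 2 * n + 1 by omega]
  simp only [zDegree, Finset.prod_mul_distrib, prod_range_ite_even, Finset.prod_const,
    Finset.card_range, Finset.prod_pow_eq_pow_sum, Nat.add_sub_cancel, sum_range_min_half]
  rw [Finset.prod_pow_eq_pow_sum]

/-- The degrees of the images of the variables under `presentationMap`, for a field with `q`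
elements. -/
def genWeight (q n : ℕ) : Fin n ⊕ Fin n ⊕ Fin (2 * n - 1) → ℕ :=
  Sum.elim (fun i => (q - 1) * q ^ i.val)
    (Sum.elim (fun i => (q - 1) * q ^ i.val) (fun m => q ^ ((m : ℤ) + 1 - n).natAbs + 1))

theorem pow_min_mul_pow_natAbs_sub (q i j : ℕ) :
    q ^ min i j * (q ^ ((i : ℤ) - j).natAbs + 1) = q ^ i + q ^ j := by
  rcases le_total i j with h | h
  · rw [min_eq_left h, mul_add, ← pow_add, mul_one, add_comm]
    congr 2
    omega
  · rw [min_eq_right h, mul_add, ← pow_add, mul_one]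
    congr 2
    omega

theorem pow_min_mul_genWeight (q : ℕ) {n d k : ℕ} (h : 2 * k + d < 2 * n - 1) :
    q ^ min (k + d) (n - (k + 1)) * genWeight q n (Sum.inr (Sum.inr ⟨2 * k + d, h⟩)) =
      q ^ (k + d) + q ^ (n - (k + 1)) := by
  rw [← pow_min_mul_pow_natAbs_sub]
  simp only [genWeight, Sum.elim_inr]
  congr 3
  omega

end ReducedDegrees

section XYIdeal

variable (K : Type) [Field K]

/-- The ideal generated by the variables `X_i` and `Y_i`. -/
noncomputable def xyIdeal : Ideal (MvPolynomial (Fin n ⊕ Fin n ⊕ Fin (2 * n - 1)) K) :=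
  Ideal.span (X '' (Set.range (Sum.inr ∘ Sum.inr))ᶜ)

theorem Xv_mem_xyIdeal (g : ℕ) : Xv K n g ∈ xyIdeal n K := by
  rw [Xv]
  split_ifs
  · exact Ideal.subset_span ⟨_, by simp, rfl⟩
  · exact Ideal.zero_mem _

theorem Yv_mem_xyIdeal (g : ℕ) : Yv K n g ∈ xyIdeal n K := by
  rw [Yv]
  split_ifs
  · exact Ideal.subset_span ⟨_, by simp, rfl⟩
  · exact Ideal.zero_mem _

theorem Zv_eq_X {j : ℤ} (m : Fin (2 * n - 1)) (hj : j + n - 1 = m) :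
    Zv K n j = X (Sum.inr (Sum.inr m)) := by
  rw [Zv, dif_pos (by omega)]
  congr 3
  exact Fin.ext (by simp only; omega)

end XYIdeal

section Relations

theorem isWeightedHomogeneous_Xv (g : ℕ) :
    IsWeightedHomogeneous (genWeight (Fintype.card F) n) (Xv F n (g + 1))
      ((Fintype.card F - 1) * Fintype.card F ^ g) := by
  rw [Xv]
  split_ifs
  · exact isWeightedHomogeneous_X F (genWeight (Fintype.card F) n) _
  · exact isWeightedHomogeneous_zero _ _ _

theorem isWeightedHomogeneous_Yv (g : ℕ) :
    IsWeightedHomogeneous (genWeight (Fintype.card F) n) (Yv F n (g + 1))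
      ((Fintype.card F - 1) * Fintype.card F ^ g) := by
  rw [Yv]
  split_ifs
  · exact isWeightedHomogeneous_X F (genWeight (Fintype.card F) n) _
  · exact isWeightedHomogeneous_zero _ _ _

theorem isWeightedHomogeneous_Zv_pow (i j : ℕ) :
    IsWeightedHomogeneous (genWeight (Fintype.card F) n)
      (Zv F n ((i : ℤ) - j) ^ Fintype.card F ^ min i j)
      (Fintype.card F ^ i + Fintype.card F ^ j) := by
  rw [Zv]
  split_ifs
  · rw [← pow_min_mul_pow_natAbs_sub]
    convert (isWeightedHomogeneous_X F (genWeight (Fintype.card F) n) _).pow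
      (Fintype.card F ^ min i j) using 1
    simp only [genWeight, Sum.elim_inr, smul_eq_mul]
    congr 3
    omega
  · rw [zero_pow (pow_ne_zero _ Fintype.card_ne_zero)]
    exact isWeightedHomogeneous_zero _ _ _

theorem isWeightedHomogeneous_pairingSum (d k : ℕ) :
    IsWeightedHomogeneous (genWeight (Fintype.card F) n) (pairingSum F n d k)
      (Fintype.card F ^ (k + d) + Fintype.card F ^ (n - (k + 1))) := by
  have hq : Fintype.card F ≠ 0 := Fintype.card_ne_zero
  refine .sum _ _ _ fun i hi => .sum _ _ _ fun j hj => ?_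
  rw [Finset.mem_range, Nat.lt_succ_iff] at hi hj
  have hsign := (isWeightedHomogeneous_one F (genWeight (Fintype.card F) n)).neg.pow (i + j)
  have hCX := (isWeightedHomogeneous_dicksonSum hq (isWeightedHomogeneous_Xv F n) hi).pow
    (Fintype.card F ^ d)
  have hCY := isWeightedHomogeneous_dicksonSum hq (isWeightedHomogeneous_Yv F n) hj
  have hi' : Fintype.card F ^ (i + d) ≤ Fintype.card F ^ (k + d) :=
    Nat.pow_le_pow_right (by omega) (by omega)
  have hj' : Fintype.card F ^ j ≤ Fintype.card F ^ (n - (k + 1)) :=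
    Nat.pow_le_pow_right (by omega) hj
  have hdeg : (i + j) • 0 + Fintype.card F ^ d • (Fintype.card F ^ k - Fintype.card F ^ i) +
      (Fintype.card F ^ (n - (k + 1)) - Fintype.card F ^ j) +
      (Fintype.card F ^ (i + d) + Fintype.card F ^ j) =
      Fintype.card F ^ (k + d) + Fintype.card F ^ (n - (k + 1)) := by
    rw [smul_zero, smul_eq_mul, Nat.mul_sub, ← pow_add, ← pow_add, add_comm d k, add_comm d i]
    omega
  exact hdeg ▸ ((hsign.mul hCX).mul hCY).mul (isWeightedHomogeneous_Zv_pow F n (i + d) j)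

theorem isWeightedHomogeneous_RvTilde {k : ℕ} (hk : k < n) :
    IsWeightedHomogeneous (genWeight (Fintype.card F) n) (RvTilde F n (k + 1))
      ((Fintype.card F - 1) * (Fintype.card F ^ k + Fintype.card F ^ (n - (k + 1)))) := by
  rw [RvTilde_succ F n hk]
  refine ((isWeightedHomogeneous_pairingSum F n 0 k).pow _).sub ?_
  rw [smul_eq_mul, mul_add]
  exact (isWeightedHomogeneous_Xv F n k).mul (isWeightedHomogeneous_Yv F n _)

theorem isWeightedHomogeneous_RvTildePlus (k : ℕ) :
    IsWeightedHomogeneous (genWeight (Fintype.card F) n) (RvTildePlus F n (k + 1))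
      (Fintype.card F ^ (k + 1) + Fintype.card F ^ (n - (k + 1))) := by
  rw [RvTildePlus_succ]
  refine (isWeightedHomogeneous_pairingSum F n 1 k).sub ?_
  have hq : (Fintype.card F - 1) * Fintype.card F ^ k + Fintype.card F ^ k =
      Fintype.card F ^ (k + 1) := by
    rw [← Nat.succ_mul, Nat.succ_eq_add_one, Nat.sub_add_cancel Fintype.card_pos, pow_succ']
  rw [← hq, add_assoc]
  exact (isWeightedHomogeneous_Xv F n k).mul (isWeightedHomogeneous_pairingSum F n 0 k)

/-- Only the term with `C_{k,k} = C*_{n-k-1,n-k-1} = 1` survives modulo the `X_i` and `Y_i`. -/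
theorem mk_pairingSum {d k : ℕ} (h : 2 * k + d < 2 * n - 1) :
    Ideal.Quotient.mk (xyIdeal n F) (pairingSum F n d k) = (-1) ^ (k + (n - (k + 1))) *
      Ideal.Quotient.mk (xyIdeal n F) (X (Sum.inr (Sum.inr ⟨2 * k + d, h⟩))) ^
        Fintype.card F ^ min (k + d) (n - (k + 1)) := by
  have hq : Fintype.card F ≠ 0 := Fintype.card_ne_zero
  have hCX {s t : ℕ} (hst : t < s) : Ideal.Quotient.mk (xyIdeal n F) (CXv F n s t) = 0 :=
    Ideal.Quotient.eq_zero_iff_mem.mpr (dicksonSum_mem hq (fun _ => Xv_mem_xyIdeal n F _) hst)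
  have hCY {s t : ℕ} (hst : t < s) : Ideal.Quotient.mk (xyIdeal n F) (CYv F n s t) = 0 :=
    Ideal.Quotient.eq_zero_iff_mem.mpr (dicksonSum_mem hq (fun _ => Yv_mem_xyIdeal n F _) hst)
  simp only [pairingSum, map_sum, map_mul, map_pow, map_neg, map_one]
  rw [Finset.sum_range_succ, Finset.sum_eq_zero, Finset.sum_range_succ, Finset.sum_eq_zero,
    CXv_eq_dicksonSum, CYv_eq_dicksonSum, dicksonSum_self, dicksonSum_self, map_one, one_pow,
    Zv_eq_X n F ⟨2 * k + d, h⟩ (by simp only; omega)]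
  · ring
  · intro j hj
    rw [hCY (Finset.mem_range.mp hj), mul_zero, zero_mul]
  · intro i hi
    refine Finset.sum_eq_zero fun j _ => ?_
    rw [hCX (Finset.mem_range.mp hi), zero_pow (pow_ne_zero d hq), mul_zero, zero_mul, zero_mul]

/-- The ideal generated by the polynomials `R̃_k` and `R̃_k^+`. -/
noncomputable def relationIdeal : Ideal (MvPolynomial (Fin n ⊕ Fin n ⊕ Fin (2 * n - 1)) F) :=
  Ideal.span ({p | ∃ k, (1 ≤ k ∧ k ≤ n) ∧ p = RvTilde F n k} ∪
    {p | ∃ k, (1 ≤ k ∧ k ≤ n - 1) ∧ p = RvTildePlus F n k})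

theorem relationIdeal_le_ker : relationIdeal F n ≤ RingHom.ker (presentationMap F n) := by
  rw [relationIdeal, Ideal.span_le]
  rintro _ (⟨_ | k, ⟨h1, hk⟩, rfl⟩ | ⟨_ | k, ⟨h1, hk⟩, rfl⟩)
  · omega
  · exact presentationMap_RvTilde F n (by omega)
  · omega
  · exact presentationMap_RvTildePlus F n (by omega)

theorem X_pow_zDegree_sub_RvTilde_mem {k : ℕ} (h : 2 * k < 2 * n - 1) :
    X (Sum.inr (Sum.inr ⟨2 * k, h⟩)) ^ zDegree (Fintype.card F) n (2 * k) - RvTilde F n (k + 1) ∈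
      xyIdeal n F := by
  have hsign (a : ℕ) : (((-1) ^ a) ^ (Fintype.card F - 1) :
      MvPolynomial (Fin n ⊕ Fin n ⊕ Fin (2 * n - 1)) F ⧸ xyIdeal n F) = 1 := by
    simpa using congrArg (algebraMap F (_ ⧸ xyIdeal n F))
      (FiniteField.pow_card_sub_one_eq_one ((-1 : F) ^ a) (by simp))
  rw [← Ideal.Quotient.eq_zero_iff_mem, RvTilde_succ F n (by omega), zDegree_two_mul]
  simp only [map_sub, map_pow, map_mul]
  rw [mk_pairingSum F n (d := 0) h, Ideal.Quotient.eq_zero_iff_mem.mpr (Xv_mem_xyIdeal n F (k + 1)),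
    mul_pow, hsign, mul_comm (Fintype.card F - 1), pow_mul, zero_mul, one_mul, sub_zero]
  exact sub_self _

theorem X_pow_zDegree_sub_RvTildePlus_mem {k : ℕ} (h : 2 * k + 1 < 2 * n - 1) :
    X (Sum.inr (Sum.inr ⟨2 * k + 1, h⟩)) ^ zDegree (Fintype.card F) n (2 * k + 1) -
      (-1) ^ (k + (n - (k + 1))) * RvTildePlus F n (k + 1) ∈ xyIdeal n F := by
  have hsign {R : Type} [CommRing R] (a : ℕ) : (-1 : R) ^ a * (-1) ^ a = 1 := by
    rw [← mul_pow, neg_mul_neg, one_mul, one_pow]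
  rw [← Ideal.Quotient.eq_zero_iff_mem, RvTildePlus_succ, zDegree_two_mul_add_one]
  simp only [map_sub, map_pow, map_mul, map_neg, map_one]
  rw [mk_pairingSum F n h, Ideal.Quotient.eq_zero_iff_mem.mpr (Xv_mem_xyIdeal n F (k + 1)),
    zero_mul, sub_zero, ← mul_assoc, hsign, one_mul, sub_self]

theorem exists_mem_relationIdeal (m : Fin (2 * n - 1)) :
    ∃ r ∈ relationIdeal F n, IsWeightedHomogeneous (genWeight (Fintype.card F) n) r
        (zDegree (Fintype.card F) n m * genWeight (Fintype.card F) n (Sum.inr (Sum.inr m))) ∧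
      X (Sum.inr (Sum.inr m)) ^ zDegree (Fintype.card F) n m - r ∈ xyIdeal n F := by
  obtain ⟨m, hm⟩ := m
  obtain ⟨k, rfl | rfl⟩ := Nat.even_or_odd' m
  · refine ⟨_, Ideal.subset_span (Or.inl ⟨k + 1, by omega, rfl⟩), ?_,
      X_pow_zDegree_sub_RvTilde_mem F n hm⟩
    have hdeg := pow_min_mul_genWeight (Fintype.card F) (d := 0) hm
    simp only [add_zero] at hdeg
    rw [zDegree_two_mul, mul_assoc, hdeg]
    exact isWeightedHomogeneous_RvTilde F n (by omega)
  · refine ⟨_, Ideal.mul_mem_left _ _ (Ideal.subset_span (Or.inr ⟨k + 1, by omega, rfl⟩)), ?_,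
      X_pow_zDegree_sub_RvTildePlus_mem F n hm⟩
    rw [zDegree_two_mul_add_one, pow_min_mul_genWeight _ hm]
    simpa using ((isWeightedHomogeneous_one F (genWeight (Fintype.card F) n)).neg.pow _).mul
      (isWeightedHomogeneous_RvTildePlus F n k)

theorem restrictSupport_sup_relationIdeal :
    restrictSupport F (reducedExps n (Fintype.card F)) ⊔
      (relationIdeal F n).restrictScalars F = ⊤ := by
  have hpos (i : ℕ) : 0 < (Fintype.card F - 1) * Fintype.card F ^ i :=
    Nat.mul_pos (Nat.sub_pos_of_lt Fintype.one_lt_card) (pow_pos Fintype.card_pos i)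
  refine restrictSupport_sup_ideal_eq_top (z := Sum.inr ∘ Sum.inr)
    (w := genWeight (Fintype.card F) n) ?_ (exists_mem_relationIdeal F n)
  rintro (i | i | m) h
  · exact hpos i
  · exact hpos i
  · exact absurd ⟨m, rfl⟩ h

end Relations

section PowerProducts

/-- The power product `∏ i, z i ^ a i`. -/
def powProd {ι R : Type*} [Fintype ι] [CommMonoid R] (z : ι → R) (a : ι → ℕ) : R :=
  ∏ i, z i ^ a i

/-- The exponent vectors `a` with `a i < d i` for all `i`. -/
def boundedExps {ι : Type*} [Fintype ι] [DecidableEq ι] (d : ι → ℕ) : Finset (ι → ℕ) :=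
  Fintype.piFinset fun i => Finset.range (d i)

variable {ι κ : Type*} [Fintype ι] [Fintype κ]

theorem powProd_sumElim {R : Type*} [CommMonoid R] (x : ι → R) (y : κ → R) (a : ι ⊕ κ → ℕ) :
    powProd (Sum.elim x y) a = powProd x (a ∘ Sum.inl) * powProd y (a ∘ Sum.inr) :=
  Fintype.prod_sum_type _

theorem powProd_zero {R : Type*} [CommMonoid R] (z : ι → R) : powProd z 0 = 1 := by
  simp only [powProd, Pi.zero_apply, pow_zero, Finset.prod_const_one]

theorem mem_boundedExps [DecidableEq ι] {d a : ι → ℕ} : a ∈ boundedExps d ↔ ∀ i, a i < d i := by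
  simp only [boundedExps, Fintype.mem_piFinset, Finset.mem_range]

theorem card_boundedExps [DecidableEq ι] (d : ι → ℕ) : (boundedExps d).card = ∏ i, d i := by
  simp only [boundedExps, Fintype.card_piFinset, Finset.card_range]

variable {A R : Type*} [CommRing A] [CommRing R] [Algebra A R]

theorem toSubmodule_adjoin_range (z : ι → R) :
    Subalgebra.toSubmodule (Algebra.adjoin A (Set.range z)) =
      Submodule.span A (Set.range (powProd z)) := by
  refine le_antisymm (fun r hr => ?_) (Submodule.span_le.mpr ?_)
  · rw [Algebra.adjoin_range_eq_range_aeval] at hr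
    obtain ⟨p, rfl⟩ := hr
    change aeval z p ∈ _
    rw [aeval_def, eval₂_eq']
    refine Submodule.sum_mem _ fun a _ => ?_
    rw [← Algebra.smul_def]
    exact Submodule.smul_mem _ _ (Submodule.subset_span ⟨a, rfl⟩)
  · rintro _ ⟨a, rfl⟩
    exact (Algebra.adjoin A (Set.range z)).prod_mem fun i _ =>
      pow_mem (Algebra.subset_adjoin (Set.mem_range_self i)) _

theorem powProd_mem_span_boundedExps [DecidableEq ι] {z : ι → R} {d : ι → ℕ}
    (hz : ∀ i, ∃ p : Polynomial A, p.Monic ∧ p.natDegree = d i ∧ Polynomial.aeval (z i) p = 0)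
    (a : ι → ℕ) : powProd z a ∈ Submodule.span A (powProd z '' boundedExps d) := by
  have hpow (i : ι) : ∃ c : ℕ → A, ∑ k ∈ Finset.range (d i), c k • z i ^ k = z i ^ a i := by
    classical
    obtain ⟨p, hp, hdeg, hroot⟩ := hz i
    have hmem : z i ^ a i ∈ Subalgebra.toSubmodule (Algebra.adjoin A {z i}) :=
      pow_mem (Algebra.self_mem_adjoin_singleton A (z i)) _
    rwa [← Submodule.span_range_natDegree_eq_adjoin hp hroot, Finset.coe_image, hdeg,
      Submodule.mem_span_image_finset_iff_exists_fun'] at hmem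
  choose c hc using hpow
  simp only [powProd, ← hc, Finset.prod_univ_sum, Finset.prod_smul]
  exact Submodule.sum_mem _ fun b hb =>
    Submodule.smul_mem _ _ (Submodule.subset_span ⟨b, hb, rfl⟩)

theorem toSubmodule_adjoin_range_sumElim_le [DecidableEq ι] [DecidableEq κ]
    {x : ι → R} {u : κ → R} {d : ι → ℕ} {D : κ → ℕ}
    (hx : ∀ a, powProd x a ∈ Submodule.span A (powProd x '' boundedExps d))
    (hu : ∀ a, powProd u a ∈ Submodule.span A (powProd u '' boundedExps D)) :
    Subalgebra.toSubmodule (Algebra.adjoin A (Set.range (Sum.elim x u))) ≤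
      Submodule.span A (powProd (Sum.elim x u) '' boundedExps (Sum.elim d D)) := by
  rw [toSubmodule_adjoin_range, Submodule.span_le]
  rintro _ ⟨a, rfl⟩
  have hmul := Submodule.mul_mem_mul (hx (a ∘ Sum.inl)) (hu (a ∘ Sum.inr))
  rw [Submodule.span_mul_span, ← powProd_sumElim] at hmul
  refine Submodule.span_mono ?_ hmul
  rintro _ ⟨_, ⟨b, hb, rfl⟩, _, ⟨e, he, rfl⟩, rfl⟩
  refine ⟨Sum.elim b e, ?_, powProd_sumElim x u _⟩
  rw [Finset.mem_coe, mem_boundedExps] at hb he ⊢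
  rintro (i | j)
  exacts [hb i, he j]

end PowerProducts

section RankCount

theorem linearIndependent_of_mem_span_of_card_le {A M ι κ : Type*} [CommRing A] [Nontrivial A]
    [AddCommGroup M] [Module A M] [Fintype ι] [Fintype κ] {w : ι → M} {v : κ → M}
    (hw : LinearIndependent A w) (hspan : ∀ i, w i ∈ Submodule.span A (Set.range v))
    (hcard : Fintype.card κ ≤ Fintype.card ι) : LinearIndependent A v := by
  let N := Submodule.span A (Set.range v)
  have : Module.Finite A N := Module.Finite.span_of_finite A (Set.finite_range v)
  have hw' : LinearIndependent A (fun i => (⟨w i, hspan i⟩ : N)) := .of_comp N.subtype hw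
  let v' : κ → N := fun j => ⟨v j, Submodule.subset_span ⟨j, rfl⟩⟩
  have htop : Submodule.span A (Set.range v') = ⊤ :=
    (Submodule.span_range_subtype_eq_top_iff N _).mpr rfl
  exact (linearIndependent_of_top_le_span_of_card_le_finrank htop.ge
    (hcard.trans hw'.fintype_card_le_finrank)).map' N.subtype N.ker_subtype

theorem pow_mul_powProd_mem {κ R S : Type*} [Fintype κ] [CommMonoid R] [SetLike S R]
    [SubmonoidClass S R] {s : S} {y : κ → R} {δ : R} (hδ : δ ∈ s) (hδy : ∀ j, δ * y j ∈ s)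
    {d a : κ → ℕ} (ha : ∀ j, a j ≤ d j) : δ ^ (∑ j, d j) * powProd y a ∈ s := by
  rw [powProd, ← Finset.prod_pow_eq_pow_sum, ← Finset.prod_mul_distrib]
  refine prod_mem fun j _ => ?_
  rw [← Nat.sub_add_cancel (ha j), pow_add, mul_assoc, ← mul_pow]
  exact mul_mem (pow_mem hδ _) (pow_mem (hδy j) _)

theorem linearIndependent_powProd_of_prod_eq {ι κ τ A R : Type*} [Fintype ι] [Fintype κ] [Fintype τ]
    [DecidableEq ι] [DecidableEq κ] [DecidableEq τ] [CommRing A] [CommRing R] [IsDomain R]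
    [Algebra A R] {x : ι → R} {y : κ → R} {u : τ → R}
    {d : ι → ℕ} {d' : κ → ℕ} {D : τ → ℕ} (hcard : ∏ j, d' j = ∏ t, D t) (hd : ∀ i, 0 < d i)
    (hxy : LinearIndependent A fun a : boundedExps (Sum.elim d d') => powProd (Sum.elim x y) a.val)
    (hx : ∀ a, powProd x a ∈ Submodule.span A (powProd x '' boundedExps d))
    (hu : ∀ a, powProd u a ∈ Submodule.span A (powProd u '' boundedExps D))
    {δ : R} (hδ : δ ≠ 0) (hδmem : δ ∈ Algebra.adjoin A (Set.range (Sum.elim x u)))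
    (hδy : ∀ j, δ * y j ∈ Algebra.adjoin A (Set.range (Sum.elim x u))) :
    LinearIndependent A fun e : boundedExps D => powProd u e.val := by
  have : Nontrivial A := (algebraMap A R).domain_nontrivial
  let w (a : boundedExps (Sum.elim d d')) : R := δ ^ (∑ j, d' j) * powProd (Sum.elim x y) a.val
  have hw : LinearIndependent A w :=
    hxy.map' (LinearMap.mulLeft A (δ ^ (∑ j, d' j)))
      (LinearMap.ker_eq_bot.mpr (mul_right_injective₀ (pow_ne_zero _ hδ)))
  have hwspan (a : boundedExps (Sum.elim d d')) : w a ∈ Submodule.span A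
      (Set.range fun b : boundedExps (Sum.elim d D) => powProd (Sum.elim x u) b.val) := by
    have ha := mem_boundedExps.mp a.prop
    have hmem : powProd x (a.val ∘ Sum.inl) * (δ ^ (∑ j, d' j) * powProd y (a.val ∘ Sum.inr)) ∈
        Algebra.adjoin A (Set.range (Sum.elim x u)) :=
      mul_mem (Subalgebra.prod_mem _ fun i _ =>
          pow_mem (Algebra.subset_adjoin (Set.mem_range_self (Sum.inl i))) _)
        (pow_mul_powProd_mem hδmem hδy fun j => (ha (Sum.inr j)).le)
    rw [mul_left_comm, ← powProd_sumElim] at hmem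
    exact Set.image_eq_range _ _ ▸ toSubmodule_adjoin_range_sumElim_le hx hu hmem
  have hxu := linearIndependent_of_mem_span_of_card_le hw hwspan (by
    simp only [Fintype.card_coe, card_boundedExps, Fintype.prod_sum_type, Sum.elim_inl,
      Sum.elim_inr, hcard, le_refl])
  let extend (e : boundedExps D) : boundedExps (Sum.elim d D) :=
    ⟨Sum.elim 0 e.val, mem_boundedExps.mpr <| Sum.rec hd (mem_boundedExps.mp e.prop)⟩
  have hextend : Function.Injective extend := fun e e' h =>
    Subtype.ext (funext fun t => congrFun (Subtype.ext_iff.mp h) (Sum.inr t))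
  have hcomp : (fun e : boundedExps D => powProd u e.val) =
      (fun b : boundedExps (Sum.elim d D) => powProd (Sum.elim x u) b.val) ∘ extend :=
    funext fun e => by simp [extend, powProd]
  rw [hcomp]
  exact hxu.comp extend hextend

end RankCount

section BaseChange

theorem linearIndependent_of_linearIndependent_smul {R S M ι κ : Type*} [Semiring R] [Semiring S]
    [AddCommMonoid M] [Module R S] [Module S M] [Module R M] [IsScalarTower R S M]
    {b : ι → S} {v : κ → M} (hb : Submodule.span R (Set.range b) = ⊤)
    (h : LinearIndependent R fun p : κ × ι => b p.2 • v p.1) : LinearIndependent S v := by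
  have hsurj : Function.Surjective (Finsupp.mapRange.linearMap (α := κ)
      (Finsupp.linearCombination R b) ∘ₗ (Finsupp.curryLinearEquiv R).toLinearMap) :=
    (Finsupp.mapRange_surjective _ (map_zero _) (LinearMap.range_eq_top.mp <| by
      rw [Finsupp.range_linearCombination, hb])).comp (LinearEquiv.surjective _)
  rw [LinearIndependent, Finsupp.linearCombination_smul] at h
  exact Function.Injective.of_comp_right h hsurj

/-- The family `g`, viewed in the subalgebra that it generates. -/
def adjoinGen (K : Type*) {ι R : Type*} [CommSemiring K] [CommSemiring R] [Algebra K R] (g : ι → R)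
    (i : ι) : Algebra.adjoin K (Set.range g) :=
  ⟨g i, Algebra.subset_adjoin (Set.mem_range_self i)⟩

variable {K ι R : Type*} [CommRing K] [Fintype ι] [CommRing R] [Algebra K R]

theorem coe_powProd_adjoinGen (g : ι → R) (α : ι → ℕ) :
    ((powProd (adjoinGen K g) α : Algebra.adjoin K (Set.range g)) : R) = powProd g α := by
  simp only [powProd, adjoinGen, SubmonoidClass.coe_finsetProd, SubmonoidClass.coe_pow]

theorem span_powProd_adjoinGen (g : ι → R) :
    Submodule.span K (Set.range (powProd (adjoinGen K g))) = ⊤ := by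
  rw [← toSubmodule_adjoin_range, ← Algebra.top_toSubmodule,
    ← Algebra.adjoin_adjoin_coe_preimage (R := K) (s := Set.range g)]
  congr 2
  ext a
  simp [adjoinGen, Subtype.ext_iff]

theorem linearIndependent_adjoin_range {κ : Type*} {g : ι → R} {v : κ → R}
    (h : LinearIndependent K fun p : κ × (ι → ℕ) => powProd g p.2 * v p.1) :
    LinearIndependent (Algebra.adjoin K (Set.range g)) v := by
  refine linearIndependent_of_linearIndependent_smul (span_powProd_adjoinGen (K := K) g) ?_
  simpa only [Subalgebra.smul_def, smul_eq_mul, coe_powProd_adjoinGen] using h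

theorem linearIndependent_powProd_mul {κ : Type*} {g : ι → R} {v : κ → R}
    (hg : LinearIndependent K (powProd g))
    (hv : LinearIndependent (Algebra.adjoin K (Set.range g)) v) :
    LinearIndependent K fun p : (ι → ℕ) × κ => powProd g p.1 * v p.2 := by
  have hg' : LinearIndependent K (powProd (adjoinGen K g)) :=
    .of_comp (Algebra.adjoin K (Set.range g)).val.toLinearMap <| by
      simpa only [Function.comp_def, AlgHom.toLinearMap_apply, Subalgebra.coe_val,
        coe_powProd_adjoinGen] using hg
  simpa only [Subalgebra.smul_def, smul_eq_mul, coe_powProd_adjoinGen] using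
    linearIndependent_smul hg' hv

theorem linearIndependent_powProd_mul_of_prod_eq [IsDomain R] {σ κ τ : Type*} [Fintype σ]
    [Fintype κ] [Fintype τ] [DecidableEq σ] [DecidableEq κ] [DecidableEq τ]
    {g : ι → R} {x : σ → R} {y : κ → R} {u : τ → R} {d : σ → ℕ} {d' : κ → ℕ} {D : τ → ℕ}
    (hcard : ∏ j, d' j = ∏ t, D t) (hd : ∀ i, 0 < d i) (hg : LinearIndependent K (powProd g))
    (hxy : LinearIndependent K fun p : boundedExps (Sum.elim d d') × (ι → ℕ) =>
      powProd g p.2 * powProd (Sum.elim x y) p.1.val)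
    (hx : ∀ a, powProd x a ∈
      Submodule.span (Algebra.adjoin K (Set.range g)) (powProd x '' boundedExps d))
    (hu : ∀ a, powProd u a ∈
      Submodule.span (Algebra.adjoin K (Set.range g)) (powProd u '' boundedExps D))
    {δ : R} (hδ : δ ≠ 0)
    (hδmem : δ ∈ Algebra.adjoin (Algebra.adjoin K (Set.range g)) (Set.range (Sum.elim x u)))
    (hδy : ∀ j, δ * y j ∈
      Algebra.adjoin (Algebra.adjoin K (Set.range g)) (Set.range (Sum.elim x u))) :
    LinearIndependent K fun p : (ι → ℕ) × boundedExps D =>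
      powProd g p.1 * powProd u p.2.val := by
  have hxy' := linearIndependent_adjoin_range
    (v := fun a : boundedExps (Sum.elim d d') => powProd (Sum.elim x y) a.val) hxy
  exact linearIndependent_powProd_mul (v := fun e : boundedExps D => powProd u e.val) hg
    (linearIndependent_powProd_of_prod_eq hcard hd hxy' hx hu hδ hδmem hδy)

end BaseChange

section Adjugate

theorem det_mem_and_det_mul_mem {ι R S : Type*} [Fintype ι] [DecidableEq ι] [CommRing R]
    [SetLike S R] [SubringClass S R] {s : S} {M : Matrix ι ι R} (hM : ∀ i j, M i j ∈ s) :
    M.det ∈ s ∧ ∀ v : ι → R, (∀ i, M.mulVec v i ∈ s) → ∀ i, M.det * v i ∈ s := by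
  let M' : Matrix ι ι s := fun i j => ⟨M i j, hM i j⟩
  have hdet : M.det = (M'.det : R) := ((SubringClass.subtype s).map_det M').symm
  have hadj (i j : ι) : M.adjugate i j ∈ s :=
    congrFun₂ ((SubringClass.subtype s).map_adjugate M') i j ▸ (M'.adjugate i j).prop
  refine ⟨hdet ▸ M'.det.prop, fun v hv i => ?_⟩
  have hcramer : M.det * v i = M.adjugate.mulVec (M.mulVec v) i := by
    rw [Matrix.mulVec_mulVec, Matrix.adjugate_mul, Matrix.smul_mulVec, Matrix.one_mulVec,
      Pi.smul_apply, smul_eq_mul]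
  rw [hcramer]
  exact sum_mem fun j _ => mul_mem (hadj i j) (hv j)

end Adjugate

section LeadingTerms

variable {σ K ι : Type*} [CommRing K] [IsDomain K] (m : MonomialOrder σ)

theorem linearIndependent_of_injective_degree {v : ι → MvPolynomial σ K} (hv : ∀ i, v i ≠ 0)
    (hinj : Function.Injective fun i => m.degree (v i)) : LinearIndependent K v := by
  rw [linearIndependent_iff]
  intro l hl
  by_contra hne
  obtain ⟨i, hi, hmax⟩ := l.support.exists_max_image (fun i => m.toSyn (m.degree (v i)))
    (Finsupp.support_nonempty_iff.mpr hne)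
  have hcoeff : l i * coeff (m.degree (v i)) (v i) = 0 := by
    rw [← coeff_zero (R := K) (m.degree (v i)), ← hl, Finsupp.linearCombination_apply,
      Finsupp.sum, coeff_sum, Finset.sum_eq_single_of_mem i hi, coeff_smul, smul_eq_mul]
    intro j hj hji
    rw [coeff_smul, m.coeff_eq_zero_of_lt, smul_zero]
    exact (hmax j hj).lt_of_ne fun h => hji (hinj (m.toSyn.injective h))
  exact mul_ne_zero (Finsupp.mem_support_iff.mp hi) (m.coeff_degree_ne_zero_iff.mpr (hv i)) hcoeff

variable [Fintype ι]

theorem powProd_ne_zero {g : ι → MvPolynomial σ K} (hg : ∀ i, g i ≠ 0) (α : ι → ℕ) :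
    powProd g α ≠ 0 :=
  Finset.prod_ne_zero_iff.mpr fun i _ => pow_ne_zero _ (hg i)

theorem degree_powProd_apply {g : ι → MvPolynomial σ K} {lead : ι → σ} {d : ι → ℕ}
    (hlead : Function.Injective lead) (hg : ∀ i, g i ≠ 0)
    (hdeg : ∀ i, m.degree (g i) = Finsupp.single (lead i) (d i)) (α : ι → ℕ) (i : ι) :
    m.degree (powProd g α) (lead i) = α i * d i := by
  classical
  rw [powProd, m.degree_prod fun j _ => pow_ne_zero _ (hg j), Finsupp.finsetSum_apply,
    Finset.sum_eq_single_of_mem i (Finset.mem_univ i)]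
  · rw [m.degree_pow, hdeg, Finsupp.smul_apply, Finsupp.single_eq_same, smul_eq_mul]
  · intro j _ hji
    rw [m.degree_pow, hdeg, Finsupp.smul_apply, Finsupp.single_eq_of_ne' (hlead.ne hji), smul_zero]

theorem linearIndependent_powProd_mul_powProd_X [DecidableEq ι] {g : ι → MvPolynomial σ K}
    {lead : ι → σ} {d : ι → ℕ} (hlead : Function.Injective lead) (hg : ∀ i, g i ≠ 0)
    (hdeg : ∀ i, m.degree (g i) = Finsupp.single (lead i) (d i)) :
    LinearIndependent K fun p : boundedExps d × (ι → ℕ) =>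
      powProd g p.2 * powProd (fun i => (X (lead i) : MvPolynomial σ K)) p.1.val := by
  have hX (i : ι) : (X (lead i) : MvPolynomial σ K) ≠ 0 := X_ne_zero _
  have hdegree (p : boundedExps d × (ι → ℕ)) (i : ι) : m.degree
      (powProd g p.2 * powProd (fun i => (X (lead i) : MvPolynomial σ K)) p.1.val) (lead i) =
        d i * p.2 i + p.1.val i := by
    rw [m.degree_mul (powProd_ne_zero hg _) (powProd_ne_zero hX _), Finsupp.add_apply,
      degree_powProd_apply m hlead hg hdeg, mul_comm,
      degree_powProd_apply m hlead hX (fun i => m.degree_X), mul_one]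
  refine linearIndependent_of_injective_degree m
    (fun p => mul_ne_zero (powProd_ne_zero hg _) (powProd_ne_zero hX _)) fun p p' h => ?_
  have hdigits (i : ι) : p.1.val i = p'.1.val i ∧ p.2 i = p'.2 i := by
    have hp := mem_boundedExps.mp p.1.prop i
    have hp' := mem_boundedExps.mp p'.1.prop i
    have heq : d i * p.2 i + p.1.val i = d i * p'.2 i + p'.1.val i :=
      (hdegree p i).symm.trans ((DFunLike.congr_fun h (lead i)).trans (hdegree p' i))
    have hmod := congrArg (· % d i) heq
    simp only [Nat.mul_add_mod, Nat.mod_eq_of_lt, hp, hp'] at hmod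
    exact ⟨hmod, Nat.eq_of_mul_eq_mul_left (by omega : 0 < d i) (by omega)⟩
  exact Prod.ext (Subtype.ext (funext fun i => (hdigits i).1)) (funext fun i => (hdigits i).2)

end LeadingTerms

section LeadingMonomials

theorem monic_add_sum_of_degree_lt {σ ι K : Type*} [CommRing K] (m : MonomialOrder σ)
    {s : Finset ι} {z : MvPolynomial σ K} {x : ι → MvPolynomial σ K} (hz : m.Monic z)
    (hlt : ∀ j ∈ s, m.toSyn (m.degree (x j)) < m.toSyn (m.degree z)) (a : ι → K) :
    m.Monic (z + ∑ j ∈ s, algebraMap K _ (a j) * x j) ∧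
      m.degree (z + ∑ j ∈ s, algebraMap K _ (a j) * x j) = m.degree z := by
  induction s using Finset.cons_induction with
  | empty => simpa using hz
  | cons j s hj ih =>
    obtain ⟨hmonic, hdeg⟩ := ih fun i hi => hlt i (Finset.mem_cons_of_mem hi)
    have hj : m.toSyn (m.degree (algebraMap K _ (a j) * x j)) <
        m.toSyn (m.degree (z + ∑ i ∈ s, algebraMap K _ (a i) * x i)) := by
      rw [hdeg, ← Algebra.smul_def]
      exact m.degree_smul_le.trans_lt (hlt j (Finset.mem_cons_self j s))
    rw [Finset.sum_cons, add_left_comm, add_comm]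
    exact ⟨hmonic.add_of_lt hj, (m.degree_add_of_lt hj).trans hdeg⟩

theorem monic_orbitProd {σ K : Type*} [Field K] [Fintype K] (m : MonomialOrder σ)
    {x : ℕ → MvPolynomial σ K} {k : ℕ} {z : MvPolynomial σ K} (hz : m.Monic z)
    (hlt : ∀ j < k, m.toSyn (m.degree (x j)) < m.toSyn (m.degree z)) :
    m.Monic (orbitProd K x k z) ∧
      m.degree (orbitProd K x k z) = Fintype.card K ^ k • m.degree z := by
  have hfactor (α : Fin k → K) := monic_add_sum_of_degree_lt m (s := Finset.univ)
    (x := fun j : Fin k => x j.val) hz (fun j _ => hlt j j.isLt) α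
  refine ⟨MonomialOrder.Monic.prod fun α _ => (hfactor α).1, ?_⟩
  rw [orbitProd, m.degree_prod fun α _ => (hfactor α).1.ne_zero,
    Finset.sum_congr rfl fun α _ => (hfactor α).2, Finset.sum_const, Finset.card_univ,
    Fintype.card_fun, Fintype.card_fin]

theorem orbitProd_self_pow_ne_zero_and_degree {σ K : Type*} [Field K] [Fintype K]
    (m : MonomialOrder σ) {v : Fin n → σ} {x : ℕ → MvPolynomial σ K}
    (hx : ∀ i : Fin n, x i = X (v i))
    (hv : ∀ i j, j < i → m.toSyn (Finsupp.single (v j) 1) < m.toSyn (Finsupp.single (v i) 1))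
    (d : ℕ) (i : Fin n) : orbitProd K x i (x i) ^ d ≠ 0 ∧
      m.degree (orbitProd K x i (x i) ^ d) = Finsupp.single (v i) (d * Fintype.card K ^ i.val) := by
  obtain ⟨hmonic, hdeg⟩ := monic_orbitProd (K := K) m (x := x) (k := i) (z := X (v i)) m.monic_X
    fun j hj => by
      simpa only [hx ⟨j, hj.trans i.isLt⟩, m.degree_X] using hv i ⟨j, hj.trans i.isLt⟩ hj
  rw [hx]
  refine ⟨pow_ne_zero _ hmonic.ne_zero, ?_⟩
  rw [m.degree_pow, hdeg, m.degree_X, smul_smul, Finsupp.smul_single, smul_eq_mul, mul_one]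

theorem exists_monomialOrder_of_injective.{u} {σ : Type u} {τ : Type*} [Finite σ] [LinearOrder τ]
    {r : σ → τ} (hr : Function.Injective r) : ∃ m : MonomialOrder.{u, u} σ, ∀ s t, r t < r s →
      m.toSyn (Finsupp.single s 1) < m.toSyn (Finsupp.single t 1) := by
  let _ : LinearOrder σ := LinearOrder.lift' r hr
  refine ⟨MonomialOrder.lex, fun s t hts => ?_⟩
  rw [MonomialOrder.lex_lt_iff, Finsupp.Lex.single_lt_iff]
  exact hts

end LeadingMonomials

section OrbitGenerators

/-- The family `f̃_1, …, f̃_n, f̃_1*, …, f̃_n*`. -/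
noncomputable def orbitGen : Fin n ⊕ Fin n → MvPolynomial (Fin n ⊕ Fin n) F :=
  Sum.elim (fun i => orbitProd F (xSeq n F) i (xSeq n F i) ^ (Fintype.card F - 1))
    (fun i => orbitProd F (ySeq n F) i (ySeq n F i) ^ (Fintype.card F - 1))

/-- The degrees of `f̃_1, …, f̃_n`, and also of `f̃_1*, …, f̃_n*`. -/
def orbitDegree (q : ℕ) (i : Fin n) : ℕ :=
  (q - 1) * q ^ i.val

theorem orbitDegree_pos (i : Fin n) : 0 < orbitDegree n (Fintype.card F) i :=
  Nat.mul_pos (Nat.sub_pos_of_lt Fintype.one_lt_card) (pow_pos Fintype.card_pos _)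

theorem exists_degree_orbitGen : ∃ m : MonomialOrder.{0, 0} (Fin n ⊕ Fin n), ∀ s,
    orbitGen F n s ≠ 0 ∧ m.degree (orbitGen F n s) = Finsupp.single (Sum.map id Fin.rev s)
      (Sum.elim (orbitDegree n (Fintype.card F)) (orbitDegree n (Fintype.card F)) s) := by
  -- lexicographic, with `x_n > ⋯ > x_1` and `y_1 > ⋯ > y_n`
  obtain ⟨m, hm⟩ := exists_monomialOrder_of_injective
    (r := fun v : Fin n ⊕ Fin n => toLex (Sum.map Fin.rev id v))
    (toLex.injective.comp (Sum.map_injective.mpr ⟨Fin.rev_injective, Function.injective_id⟩))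
  refine ⟨m, Sum.rec ?_ ?_⟩
  · exact orbitProd_self_pow_ne_zero_and_degree n m (xSeq_val n F) (fun i j hji =>
      hm _ _ (Sum.Lex.inl_lt_inl_iff.mpr (Fin.rev_lt_rev.mpr hji))) _
  · exact orbitProd_self_pow_ne_zero_and_degree n m (ySeq_val n F) (fun i j hji =>
      hm _ _ (Sum.Lex.inr_lt_inr_iff.mpr (Fin.rev_lt_rev.mpr hji))) _

theorem linearIndependent_powProd_orbitGen_mul :
    LinearIndependent F fun p : boundedExps (Sum.elim (orbitDegree n (Fintype.card F))
        (orbitDegree n (Fintype.card F))) × (Fin n ⊕ Fin n → ℕ) =>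
      powProd (orbitGen F n) p.2 * powProd (Sum.elim (fun i => X (Sum.inl i))
        (fun j => (X (Sum.inr j.rev) : MvPolynomial (Fin n ⊕ Fin n) F))) p.1.val := by
  obtain ⟨m, hm⟩ := exists_degree_orbitGen F n
  have hlead : Function.Injective (Sum.map id Fin.rev : Fin n ⊕ Fin n → Fin n ⊕ Fin n) :=
    Sum.map_injective.mpr ⟨Function.injective_id, Fin.rev_injective⟩
  have hvar : (Sum.elim (fun i => X (Sum.inl i)) (fun j => X (Sum.inr j.rev)) :
      Fin n ⊕ Fin n → MvPolynomial (Fin n ⊕ Fin n) F) = fun s => X (Sum.map id Fin.rev s) :=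
    funext (Sum.rec (fun _ => rfl) fun _ => rfl)
  rw [hvar]
  exact linearIndependent_powProd_mul_powProd_X m hlead (fun s => (hm s).1) fun s => (hm s).2

theorem linearIndependent_powProd_orbitGen : LinearIndependent F (powProd (orbitGen F n)) := by
  have hzero : 0 ∈ boundedExps (Sum.elim (orbitDegree n (Fintype.card F))
      (orbitDegree n (Fintype.card F))) :=
    mem_boundedExps.mpr (Sum.rec (orbitDegree_pos F n) (orbitDegree_pos F n))
  simpa only [Function.comp_def, powProd_zero, mul_one] using
    (linearIndependent_powProd_orbitGen_mul F n).comp (fun α => (⟨0, hzero⟩, α))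
      fun _ _ h => congrArg Prod.snd h

/-- The subalgebra generated by `f̃_1, …, f̃_n, f̃_1*, …, f̃_n*`. -/
noncomputable abbrev orbitAlgebra : Subalgebra F (MvPolynomial (Fin n ⊕ Fin n) F) :=
  Algebra.adjoin F (Set.range (orbitGen F n))

theorem orbitProd_xSeq_pow_mem (g : ℕ) :
    orbitProd F (xSeq n F) g (xSeq n F g) ^ (Fintype.card F - 1) ∈ orbitAlgebra F n := by
  rcases lt_or_ge g n with hg | hg
  · exact Algebra.subset_adjoin ⟨Sum.inl ⟨g, hg⟩, rfl⟩
  · rw [xSeq, dif_neg hg.not_gt, orbitProd_apply_zero,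
      zero_pow (Nat.sub_ne_zero_of_lt Fintype.one_lt_card)]
    exact zero_mem _

theorem exists_monic_aeval_self_eq_zero {K R A : Type*} [Field K] [Fintype K] [CommRing R]
    [IsDomain R] [Algebra K R] [CommRing A] [Algebra A R] {x : ℕ → R} {y : ℕ → A} {k : ℕ}
    (hy : ∀ g ≤ k, algebraMap A R (y g) = orbitProd K x g (x g) ^ (Fintype.card K - 1)) :
    ∃ p : Polynomial A, p.Monic ∧ p.natDegree = (Fintype.card K - 1) * Fintype.card K ^ k ∧
      Polynomial.aeval (x k) p = 0 := by
  obtain ⟨p, hmonic, hdeg, haeval⟩ :=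
    exists_monic_aeval_eq_orbitProd (K := K) k fun g hg => hy g hg.le
  have hpow : (p ^ (Fintype.card K - 1)).natDegree = (Fintype.card K - 1) * Fintype.card K ^ k := by
    rw [hmonic.natDegree_pow, hdeg]
  have hpos : 0 < (Fintype.card K - 1) * Fintype.card K ^ k :=
    Nat.mul_pos (Nat.sub_pos_of_lt Fintype.one_lt_card) (pow_pos Fintype.card_pos k)
  refine ⟨p ^ (Fintype.card K - 1) - Polynomial.C (y k), (hmonic.pow _).sub_of_left ?_, ?_, ?_⟩
  · exact Polynomial.degree_C_le.trans_lt (Polynomial.natDegree_pos_iff_degree_pos.mp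
      (hpow ▸ hpos))
  · rw [Polynomial.natDegree_sub_C, hpow]
  · rw [map_sub, map_pow, haeval, Polynomial.aeval_C, hy k le_rfl, sub_self]

theorem powProd_X_inl_mem_span (a : Fin n → ℕ) :
    powProd (fun i => (X (Sum.inl i) : MvPolynomial (Fin n ⊕ Fin n) F)) a ∈
      Submodule.span (orbitAlgebra F n) (powProd (fun i => X (Sum.inl i)) ''
        boundedExps (orbitDegree n (Fintype.card F))) := by
  refine powProd_mem_span_boundedExps (fun i => ?_) a
  have := exists_monic_aeval_self_eq_zero (A := orbitAlgebra F n) (x := xSeq n F) (k := i)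
    (y := fun g => ⟨_, orbitProd_xSeq_pow_mem F n g⟩) fun _ _ => rfl
  rwa [xSeq_val] at this

end OrbitGenerators

section InvariantGenerators

/-- The invariants `u_{1-n}, …, u_{n-1}`. -/
noncomputable def uGen (m : Fin (2 * n - 1)) : MvPolynomial (Fin n ⊕ Fin n) F :=
  uInv F n ((m : ℤ) + 1 - n)

/-- The span over `orbitAlgebra` of the reduced power products of `u_{1-n}, …, u_{n-1}`. -/
noncomputable def uSpan : Submodule (orbitAlgebra F n) (MvPolynomial (Fin n ⊕ Fin n) F) :=
  .span (orbitAlgebra F n) (powProd (uGen F n) ''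
    boundedExps fun m : Fin (2 * n - 1) => zDegree (Fintype.card F) n m)

theorem presentationMap_monomial (e : Fin n ⊕ Fin n ⊕ Fin (2 * n - 1) →₀ ℕ) :
    presentationMap F n (monomial e 1) = powProd (orbitGen F n) (e ∘ Sum.map id Sum.inl) *
      powProd (uGen F n) (e ∘ Sum.inr ∘ Sum.inr) := by
  rw [presentationMap, aeval_monomial, map_one, one_mul,
    Finsupp.prod_fintype _ _ fun _ => pow_zero _]
  simp only [powProd, orbitGen, uGen, Fintype.prod_sum_type, Sum.elim_inl, Sum.elim_inr, fX_succ,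
    fY_succ, Function.comp_apply, Sum.map_inl, Sum.map_inr, id_eq, mul_assoc]

theorem presentationMap_mem_uSpan (p : MvPolynomial (Fin n ⊕ Fin n ⊕ Fin (2 * n - 1)) F) :
    presentationMap F n p ∈ uSpan F n := by
  obtain ⟨r, hr, s, hs, rfl⟩ :=
    Submodule.mem_sup.mp (restrictSupport_sup_relationIdeal F n ▸ Submodule.mem_top (x := p))
  rw [map_add, (relationIdeal_le_ker F n hs : presentationMap F n s = 0), add_zero]
  rw [restrictSupport_eq_span] at hr
  suffices h : Submodule.span F _ ≤ ((uSpan F n).restrictScalars F).comap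
      (presentationMap F n).toLinearMap from h hr
  rw [Submodule.span_le]
  rintro _ ⟨e, he, rfl⟩
  have hmem : powProd (orbitGen F n) (e ∘ Sum.map id Sum.inl) ∈ orbitAlgebra F n :=
    Subalgebra.prod_mem _ fun s _ => pow_mem (Algebra.subset_adjoin (Set.mem_range_self s)) _
  change presentationMap F n (monomial e 1) ∈ uSpan F n
  rw [presentationMap_monomial]
  exact Submodule.smul_mem _ (⟨_, hmem⟩ : orbitAlgebra F n)
    (Submodule.subset_span ⟨_, mem_boundedExps.mpr he, rfl⟩)

theorem powProd_uGen_mem_uSpan (a : Fin (2 * n - 1) → ℕ) : powProd (uGen F n) a ∈ uSpan F n := by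
  have h := presentationMap_mem_uSpan F n (monomial (Finsupp.equivFunOnFinite.symm
    (Sum.elim 0 (Sum.elim 0 a))) 1)
  rw [presentationMap_monomial] at h
  have hzero : (Finsupp.equivFunOnFinite.symm (Sum.elim 0 (Sum.elim 0 a)) ∘
      Sum.map id Sum.inl : Fin n ⊕ Fin n → ℕ) = 0 := funext (Sum.rec (fun _ => rfl) fun _ => rfl)
  rwa [hzero, powProd_zero, one_mul] at h

theorem presentationMap_mem_adjoin (p : MvPolynomial (Fin n ⊕ Fin n ⊕ Fin (2 * n - 1)) F) :
    presentationMap F n p ∈ Algebra.adjoin (orbitAlgebra F n) (Set.range (uGen F n)) := by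
  have h : uSpan F n ≤
      Subalgebra.toSubmodule (Algebra.adjoin (orbitAlgebra F n) (Set.range (uGen F n))) := by
    rw [toSubmodule_adjoin_range]
    exact Submodule.span_mono (Set.image_subset_range _ _)
  exact h (presentationMap_mem_uSpan F n p)

end InvariantGenerators

section OrbitMatrix

/-- The matrix whose `k`-th row evaluates at `x_1, …, x_n` the orbit polynomial of the span of
`x_1, …, x_k`. It is upper triangular with diagonal `f_1, …, f_n`. -/
noncomputable def orbitMatrix : Matrix (Fin n) (Fin n) (MvPolynomial (Fin n ⊕ Fin n) F) :=
  fun k m => orbitProd F (xSeq n F) k (X (Sum.inl m))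

theorem det_orbitMatrix_ne_zero : (orbitMatrix F n).det ≠ 0 := by
  obtain ⟨m, hm⟩ := exists_degree_orbitGen F n
  have htri : (orbitMatrix F n).IsUpperTriangular := fun k m hmk => by
    rw [orbitMatrix, ← xSeq_val]
    exact orbitProd_apply_eq_zero _ hmk
  rw [Matrix.det_of_isUpperTriangular htri]
  refine Finset.prod_ne_zero_iff.mpr fun i _ h => (hm (Sum.inl i)).1 ?_
  rw [orbitMatrix, ← xSeq_val] at h
  rw [orbitGen, Sum.elim_inl, h, zero_pow (Nat.sub_ne_zero_of_lt Fintype.one_lt_card)]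

theorem orbitProd_mem {K R : Type*} [Field K] [Fintype K] [CommRing R] [Algebra K R]
    {S : Subalgebra K R} {x : ℕ → R} {z : R} {k : ℕ} (hx : ∀ j < k, x j ∈ S) (hz : z ∈ S) :
    orbitProd K x k z ∈ S :=
  prod_mem fun _ _ => add_mem hz <| sum_mem fun j _ => mul_mem (S.algebraMap_mem _) (hx j j.isLt)

theorem orbitMatrix_mulVec (k : Fin n) :
    (orbitMatrix F n).mulVec (fun m => X (Sum.inr m)) k =
      presentationMap F n (∑ i ∈ Finset.range (k.val + 1),
        (-1) ^ (k.val + i) * CXv F n k i * Zv F n i) := by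
  have hZ {i : ℕ} (hi : i < k.val + 1) : presentationMap F n (Zv F n i) =
      ∑ m : Fin n, X (Sum.inl m) ^ Fintype.card F ^ i * X (Sum.inr m) := by
    rw [presentationMap_Zv F n (by omega) (by omega)]
    simpa using uInv_sub_pow F n i 0
  simp only [Matrix.mulVec, dotProduct, orbitMatrix, orbitProd_eq_sum (xSeq n F) k.val,
    Finset.sum_mul]
  rw [Finset.sum_comm, map_sum]
  refine Finset.sum_congr rfl fun i hi => ?_
  rw [map_mul, map_mul, map_pow, map_neg, map_one, hZ (Finset.mem_range.mp hi), presentationMap_CXv,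
    Finset.mul_sum]
  simp only [mul_assoc]

theorem det_orbitMatrix_mul_mem {S : Subalgebra F (MvPolynomial (Fin n ⊕ Fin n) F)}
    (hX : ∀ i, X (Sum.inl i) ∈ S) (hS : ∀ p, presentationMap F n p ∈ S) :
    (orbitMatrix F n).det ∈ S ∧ ∀ m, (orbitMatrix F n).det * X (Sum.inr m) ∈ S := by
  have hentry (k m : Fin n) : orbitMatrix F n k m ∈ S :=
    orbitProd_mem (fun j hj => by
      rw [xSeq_val n F ⟨j, hj.trans k.isLt⟩]
      exact hX _) (hX m)
  obtain ⟨hdet, hmul⟩ := det_mem_and_det_mul_mem hentry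
  exact ⟨hdet, hmul _ fun k => orbitMatrix_mulVec F n k ▸ hS _⟩

end OrbitMatrix

section Independence

theorem linearIndependent_powProd_orbitGen_mul_powProd_uGen : LinearIndependent F
    fun p : (Fin n ⊕ Fin n → ℕ) ×
        boundedExps (fun m : Fin (2 * n - 1) => zDegree (Fintype.card F) n m) =>
      powProd (orbitGen F n) p.1 * powProd (uGen F n) p.2.val := by
  let S := Algebra.adjoin (orbitAlgebra F n)
    (Set.range (Sum.elim (fun i : Fin n => X (Sum.inl i)) (uGen F n)))
  have hX (i : Fin n) : X (Sum.inl i) ∈ S := Algebra.subset_adjoin ⟨Sum.inl i, rfl⟩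
  have hS (p) : presentationMap F n p ∈ S :=
    Algebra.adjoin_mono (Set.Sum.elim_range _ _ ▸ Set.subset_union_right)
      (presentationMap_mem_adjoin F n p)
  obtain ⟨hdet, hmul⟩ := det_orbitMatrix_mul_mem F n (S := S.restrictScalars F) hX hS
  exact linearIndependent_powProd_mul_of_prod_eq (prod_zDegree (Fintype.card F) n).symm
    (orbitDegree_pos F n) (linearIndependent_powProd_orbitGen F n)
    (linearIndependent_powProd_orbitGen_mul F n) (powProd_X_inl_mem_span F n)
    (powProd_uGen_mem_uSpan F n) (det_orbitMatrix_ne_zero F n) hdet fun j => hmul j.rev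

theorem disjoint_restrictSupport_ker :
    Disjoint (restrictSupport F (reducedExps n (Fintype.card F)))
      (LinearMap.ker (presentationMap F n).toLinearMap) := by
  let index (e : reducedExps n (Fintype.card F)) : (Fin n ⊕ Fin n → ℕ) ×
      boundedExps fun m : Fin (2 * n - 1) => zDegree (Fintype.card F) n m :=
    (e.val ∘ Sum.map id Sum.inl, ⟨e.val ∘ Sum.inr ∘ Sum.inr, mem_boundedExps.mpr e.prop⟩)
  have hindex : Function.Injective index := fun e e' h => by
    have horbit := congrArg Prod.fst h
    have hu := congrArg (Subtype.val ∘ Prod.snd) h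
    refine Subtype.ext (DFunLike.ext _ _ ?_)
    rintro (i | i | m)
    exacts [congrFun horbit (Sum.inl i), congrFun horbit (Sum.inr i), congrFun hu m]
  rw [restrictSupport_eq_span, Set.image_eq_range]
  refine Submodule.range_ker_disjoint ?_
  simpa only [Function.comp_def, AlgHom.toLinearMap_apply, presentationMap_monomial, index] using
    (linearIndependent_powProd_orbitGen_mul_powProd_uGen F n).comp index hindex

end Independence

/-- Theorem (main, part (b), relations): for `n ≥ 1`, the kernel of the presentation map
`φ : P → F_q[V ⊕ V*]`, `X_i ↦ f̃_i`, `Y_i ↦ f̃_i^*`, `Z_j ↦ u_j`, is generated by the `2n-1`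
relations `R̃_1, R̃_1^+, R̃_2, R̃_2^+, …, R̃_{n-1}, R̃_{n-1}^+, R̃_n`. -/
theorem ker_presentation_Bn (hn : 1 ≤ n) :
    RingHom.ker (aeval (R := F)
        (Sum.elim (fun i : Fin n => fX F n (i.val + 1) ^ (Fintype.card F - 1))
          (Sum.elim (fun i : Fin n => fY F n (i.val + 1) ^ (Fintype.card F - 1))
            (fun m : Fin (2 * n - 1) => uInv F n ((m : ℤ) + 1 - n)))) :
        MvPolynomial (Fin n ⊕ Fin n ⊕ Fin (2 * n - 1)) F →+* MvPolynomial (Fin n ⊕ Fin n) F)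
      = Ideal.span ({p | ∃ k, (1 ≤ k ∧ k ≤ n) ∧ p = RvTilde F n k} ∪
          {p | ∃ k, (1 ≤ k ∧ k ≤ n - 1) ∧ p = RvTildePlus F n k}) := by
  have h : (relationIdeal F n).restrictScalars F =
      LinearMap.ker (presentationMap F n).toLinearMap :=
    eq_of_le_of_inf_le_of_le_sup (z := restrictSupport F (reducedExps n (Fintype.card F)))
      (relationIdeal_le_ker F n) ((disjoint_restrictSupport_ker F n).symm.le_bot.trans bot_le)
      (le_top.trans ((sup_comm _ _).trans (restrictSupport_sup_relationIdeal F n)).ge)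
  exact Ideal.ext fun p => (SetLike.ext_iff.mp h p).symm
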